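/- arXiv:1401.0780 — 3 statements merged into one kernel-verified Lean document; each statement's English description precedes it below -/
import Mathlib

section
/- Assume ν_d((−π,π]²) > 0, and let ξ be a random point measure almost surely in 𝒞₂ such that d₄(EM(W_N/N), ξ) → 0 in probability as N → ∞ (such ξ exists). Then the random variable ∫_ℝ x² ξ(dx) = ∑_{j≠0} α_j(ξ)² is strictly positive almost surely, and its distribution is non-degenerate (it is not almost surely equal to a constant). -/
open MeasureTheory ProbabilityTheory Filter Real

noncomputable section

/-- The square `(-π, π]²` on which the spectral measure lives. -/
def specBox : Set (ℝ × ℝ) := Set.Ioc (-π) π ×ˢ Set.Ioc (-π) π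

/-- `(1/N) ∑_j g(λ_j(A))`, the integral of `g` against the empirical spectral
distribution of a symmetric `N × N` real matrix `A` (junk value `0` if `A` is
not symmetric). -/
def esdEval {N : ℕ} (A : Matrix (Fin N) (Fin N) ℝ) (g : ℝ → ℝ) : ℝ :=
  if hA : A.IsHermitian then (N : ℝ)⁻¹ * ∑ j, g (hA.eigenvalues j) else 0

/-- The (random) empirical spectral distributions of `A N` converge weakly in
probability to the probability measure `μ`: for every bounded continuous `g`,
`∫ g d(ESD(A N)) → ∫ g dμ` in probability. -/
def ESDTendstoInProb {Ω : Type*} [MeasurableSpace Ω] (P : Measure Ω)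
    (A : (N : ℕ) → Ω → Matrix (Fin N) (Fin N) ℝ) (μ : Measure ℝ) : Prop :=
  ∀ g : ℝ → ℝ, Continuous g → (∃ C, ∀ x, |g x| ≤ C) →
    ∀ ε > 0, Tendsto (fun N => P {ω | ε ≤ |esdEval (A N ω) g - ∫ x, g x ∂μ|})
      atTop (nhds 0)

/-- The symmetric matrix `W_N/√N`, where `W_N(i,j) = X_{i,j} + X_{j,i}`,
`1 ≤ i,j ≤ N`. -/
def scaledW {Ω : Type*} (X : ℤ → ℤ → Ω → ℝ) (N : ℕ) (ω : Ω) :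
    Matrix (Fin N) (Fin N) ℝ :=
  fun i j => (Real.sqrt N)⁻¹ *
    (X ((i : ℕ) + 1) ((j : ℕ) + 1) ω + X ((j : ℕ) + 1) ((i : ℕ) + 1) ω)

/-- A centered stationary Gaussian process indexed by `ℤ²` with positive
variance: every finite real linear combination is a centered Gaussian random
variable, and second moments are shift invariant. -/
structure StatGauss {Ω : Type*} [MeasurableSpace Ω] (P : Measure Ω)
    (X : ℤ → ℤ → Ω → ℝ) : Prop where
  meas : ∀ j k, Measurable (X j k)
  gauss : ∀ c : (ℤ × ℤ) →₀ ℝ, ∃ v : NNReal,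
    P.map (fun ω => ∑ p ∈ c.support, c p * X p.1 p.2 ω) = gaussianReal 0 v
  var_pos : 0 < ∫ ω, (X 0 0 ω) ^ 2 ∂P
  stat : ∀ j k u v : ℤ,
    ∫ ω, X j k ω * X (j + u) (k + v) ω ∂P = ∫ ω, X 0 0 ω * X u v ω ∂P

/-- The spectral measure `ν` of the process `X` (from the Herglotz
representation), together with the standing assumption of the paper:
`ν = ν_ac + ν_d`, where `ν_ac` is absolutely continuous with respect to
Lebesgue measure with density `f ≥ 0` and `ν_d = νd` is discrete (supported on
a countable set). -/
structure SpectralDecomp {Ω : Type*} [MeasurableSpace Ω] (P : Measure Ω)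
    (X : ℤ → ℤ → Ω → ℝ) (ν νd : Measure (ℝ × ℝ)) (f : ℝ × ℝ → ℝ) : Prop where
  finite : IsFiniteMeasure ν
  support : ν specBoxᶜ = 0
  herglotz : ∀ u v : ℤ,
    (∫ q, Complex.exp (Complex.I * ((u * q.1 + v * q.2 : ℝ) : ℂ)) ∂ν)
      = ((∫ ω, X 0 0 ω * X u v ω ∂P : ℝ) : ℂ)
  f_nonneg : ∀ q, 0 ≤ f q
  f_meas : Measurable f
  discrete : ∃ s : Set (ℝ × ℝ), s.Countable ∧ νd sᶜ = 0
  decomp : ν = (volume.restrict specBox).withDensity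
      (fun q => ENNReal.ofReal (f q)) + νd

/-- A point configuration: the sequences `(α_1(ξ), α_2(ξ), …)` (nonnegative
part) and `(α_{-1}(ξ), α_{-2}(ξ), …)` (nonpositive part) of a point measure
`ξ = ∞·δ_0 + ∑_{j≠0} δ_{α_j(ξ)}` in `𝒫`. -/
abbrev PtCfg : Type := (ℕ → ℝ) × (ℕ → ℝ)

/-- The eigen measure `EM(A) = ∞·δ_0 + ∑_j δ_{λ_j(A)}` of a symmetric matrix
`A`, recorded as a point configuration: the nonnegative parts of the
eigenvalues sorted in decreasing order (padded with `0`s) and the nonpositive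
parts sorted in increasing order (padded with `0`s). -/
def EMcfg {N : ℕ} (A : Matrix (Fin N) (Fin N) ℝ) : PtCfg :=
  if hA : A.IsHermitian then
    (fun n =>
      (List.insertionSort (· ≥ ·)
        ((List.ofFn hA.eigenvalues).map fun t => max t 0)).getD n 0,
     fun n =>
      (List.insertionSort (· ≤ ·)
        ((List.ofFn hA.eigenvalues).map fun t => min t 0)).getD n 0)
  else (fun _ => 0, fun _ => 0)

/-- `ξ ∈ 𝒞_p`: the point measure `ξ` satisfies `∑_{j≠0} |α_j(ξ)|^p < ∞`. -/
def MemC (p : ℕ) (ξ : PtCfg) : Prop :=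
  Summable (fun n => |ξ.1 n| ^ p) ∧ Summable (fun n => |ξ.2 n| ^ p)

/-- The distance `d_p(ξ₁, ξ₂) = (∑_{j≠0} |α_j(ξ₁) - α_j(ξ₂)|^p)^{1/p}` on
`𝒞_p`. -/
def dPt (p : ℕ) (ξ₁ ξ₂ : PtCfg) : ℝ :=
  ((∑' n, |ξ₁.1 n - ξ₂.1 n| ^ p) + ∑' n, |ξ₁.2 n - ξ₂.2 n| ^ p) ^ ((p : ℝ)⁻¹)

/-- The symmetric matrix `W_N/N`, where `W_N(i,j) = X_{i,j} + X_{j,i}`. -/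
def scaledW1 {Ω : Type*} (X : ℤ → ℤ → Ω → ℝ) (N : ℕ) (ω : Ω) :
    Matrix (Fin N) (Fin N) ℝ :=
  fun i j => (N : ℝ)⁻¹ *
    (X ((i : ℕ) + 1) ((j : ℕ) + 1) ω + X ((j : ℕ) + 1) ((i : ℕ) + 1) ω)


lemma aux_op {N : ℕ} (A : Matrix (Fin N) (Fin N) ℝ) (hA : A.IsHermitian) (M : ℝ)
    (hM : ∀ i, |hA.eigenvalues i| ≤ M) (hM0 : 0 ≤ M)
    (u v : Fin N → ℝ) (hu : ∀ i, |u i| ≤ 1) (hv : ∀ i, |v i| ≤ 1) :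
    |∑ j, ∑ k, u j * v k * A j k| ≤ N * M := by
  set b := hA.eigenvectorBasis with hb
  set U : EuclideanSpace ℝ (Fin N) := WithLp.toLp 2 u
  set V : EuclideanSpace ℝ (Fin N) := WithLp.toLp 2 v
  have hn : ∀ w : Fin N → ℝ, (∀ i, |w i| ≤ 1) →
      ∑ i, (inner ℝ (b i) (WithLp.toLp 2 w)) ^ 2 ≤ (N : ℝ) := by
    intro w hw
    have h1 := b.sum_sq_norm_inner_right (WithLp.toLp 2 w)
    simp only [Real.norm_eq_abs, sq_abs] at h1
    rw [h1, EuclideanSpace.norm_sq_eq]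
    calc ∑ i, ‖w i‖ ^ 2 ≤ ∑ i : Fin N, (1 : ℝ) := by
          refine Finset.sum_le_sum fun i _ => ?_
          have := hw i
          rw [Real.norm_eq_abs]
          nlinarith [abs_nonneg (w i)]
      _ = N := by simp
  have hAV : (∑ j, ∑ k, u j * v k * A j k) = inner ℝ U (WithLp.toLp 2 (A.mulVec v)) := by
    simp only [PiLp.inner_apply, U, Matrix.mulVec, dotProduct, RCLike.inner_apply, conj_trivial]
    refine Finset.sum_congr rfl fun j _ => ?_
    rw [Finset.sum_mul]
    refine Finset.sum_congr rfl fun k _ => ?_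
    ring
  have hcoef : ∀ i, inner ℝ (b i) (WithLp.toLp 2 (A.mulVec v)) =
      hA.eigenvalues i * inner ℝ (b i) V := by
    intro i
    have h1 := hA.mulVec_eigenvectorBasis i
    have hAt : A.transpose = A := by
      have := hA.eq
      rwa [Matrix.conjTranspose_eq_transpose_of_trivial] at this
    simp only [EuclideanSpace.inner_eq_star_dotProduct, V, star_trivial]
    rw [dotProduct_comm, Matrix.dotProduct_mulVec, ← Matrix.mulVec_transpose, hAt, h1,
      smul_dotProduct, dotProduct_comm, smul_eq_mul]
  rw [hAV, ← b.sum_inner_mul_inner]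
  calc |∑ i, inner ℝ U (b i) * inner ℝ (b i) (WithLp.toLp 2 (A.mulVec v))|
      ≤ ∑ i, |inner ℝ U (b i) * inner ℝ (b i) (WithLp.toLp 2 (A.mulVec v))| :=
        Finset.abs_sum_le_sum_abs _ _
    _ ≤ ∑ i, M * (((inner ℝ (b i) U) ^ 2 + (inner ℝ (b i) V) ^ 2) / 2) := by
        refine Finset.sum_le_sum fun i _ => ?_
        rw [hcoef, real_inner_comm, abs_mul, abs_mul, mul_left_comm]
        refine mul_le_mul (hM i) ?_ (by positivity) hM0
        nlinarith [sq_nonneg (|inner ℝ (b i) U| - |inner ℝ (b i) V|),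
          sq_abs (inner ℝ (b i) U), sq_abs (inner ℝ (b i) V)]
    _ = M * ((∑ i, (inner ℝ (b i) U) ^ 2 + ∑ i, (inner ℝ (b i) V) ^ 2) / 2) := by
        rw [← Finset.mul_sum, ← Finset.sum_div, Finset.sum_add_distrib]
    _ ≤ N * M := by
        have h1 := hn u hu
        have h2 := hn v hv
        rw [mul_comm (N : ℝ)]
        gcongr
        simp only [U, V]
        linarith

lemma aux_mem {N : ℕ} (A : Matrix (Fin N) (Fin N) ℝ) (hA : A.IsHermitian) (i : Fin N) :
    (∃ n, |(EMcfg A).1 n| = |hA.eigenvalues i|) ∨ (∃ n, |(EMcfg A).2 n| = |hA.eigenvalues i|) := by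
  have key : ∀ (l : List ℝ) (x : ℝ), x ∈ l → ∃ n, l.getD n 0 = x := by
    intro l x hx
    obtain ⟨n, hn, h⟩ := List.getElem_of_mem hx
    exact ⟨n, by rw [List.getD_eq_getElem _ _ hn, h]⟩
  simp only [EMcfg, dif_pos hA]
  rcases le_total 0 (hA.eigenvalues i) with h | h
  · left
    obtain ⟨n, hn⟩ := key (List.insertionSort (· ≥ ·)
        ((List.ofFn hA.eigenvalues).map fun t => max t 0)) (hA.eigenvalues i) (by
      rw [List.mem_insertionSort, List.mem_map]
      exact ⟨hA.eigenvalues i, by simp [List.mem_ofFn], max_eq_left h⟩)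
    exact ⟨n, by rw [hn]⟩
  · right
    obtain ⟨n, hn⟩ := key (List.insertionSort (· ≤ ·)
        ((List.ofFn hA.eigenvalues).map fun t => min t 0)) (hA.eigenvalues i) (by
      rw [List.mem_insertionSort, List.mem_map]
      exact ⟨hA.eigenvalues i, by simp [List.mem_ofFn], min_eq_left h⟩)
    exact ⟨n, by rw [hn]⟩

lemma aux_fin {N : ℕ} (A : Matrix (Fin N) (Fin N) ℝ) :
    (∀ n, N ≤ n → (EMcfg A).1 n = 0) ∧ (∀ n, N ≤ n → (EMcfg A).2 n = 0) := by
  unfold EMcfg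
  split_ifs with hA
  · constructor <;> intro n hn <;> apply List.getD_eq_default <;> simpa using hn
  · simp

lemma aux_seq (N : ℕ) (a b : ℕ → ℝ) (ha : ∀ n, N ≤ n → a n = 0)
    (hb : Summable fun n => |b n| ^ 2) (n : ℕ) :
    |a n - b n| ^ 4 ≤ (∑' n, |a n - b n| ^ 4) := by
  have hb4 : Summable fun n => |b n| ^ 4 := by
    have h0 := hb.tendsto_atTop_zero
    refine Summable.of_norm_bounded_eventually_nat hb ?_
    filter_upwards [h0.eventually (gt_mem_nhds one_pos)] with n hn
    rw [Real.norm_of_nonneg (by positivity)]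
    have : |b n| ^ 4 = |b n| ^ 2 * |b n| ^ 2 := by ring
    rw [this]
    nlinarith [sq_nonneg (|b n|)]
  have hs : Summable fun n => |a n - b n| ^ 4 := by
    refine (summable_nat_add_iff N).1 ?_
    refine ((summable_nat_add_iff N).2 hb4).congr fun n => ?_
    rw [ha (n + N) (by omega)]; simp
  exact hs.le_tsum n (fun _ _ => by positivity)

lemma aux_dist {N : ℕ} (A : Matrix (Fin N) (Fin N) ℝ) (ξ : PtCfg) (h : MemC 2 ξ) (n : ℕ) :
    |(EMcfg A).1 n - ξ.1 n| ≤ dPt 4 (EMcfg A) ξ ∧ |(EMcfg A).2 n - ξ.2 n| ≤ dPt 4 (EMcfg A) ξ := by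
  obtain ⟨h1, h2⟩ := aux_fin A
  have e1 := aux_seq N _ ξ.1 h1 h.1 n
  have e2 := aux_seq N _ ξ.2 h2 h.2 n
  have t1 : 0 ≤ (∑' n, |(EMcfg A).1 n - ξ.1 n| ^ 4) := tsum_nonneg fun _ => by positivity
  have t2 : 0 ≤ (∑' n, |(EMcfg A).2 n - ξ.2 n| ^ 4) := tsum_nonneg fun _ => by positivity
  have key : ∀ x T : ℝ, 0 ≤ x → x ^ 4 ≤ T → x ≤ T ^ (((4 : ℕ) : ℝ)⁻¹) := by
    intro x T hx hxT
    rw [← Real.pow_rpow_inv_natCast hx (by norm_num : (4 : ℕ) ≠ 0)]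
    exact Real.rpow_le_rpow (by positivity) hxT (by positivity)
  exact ⟨key _ _ (abs_nonneg _) (by linarith), key _ _ (abs_nonneg _) (by linarith)⟩

lemma aux_lower {N : ℕ} (hN : 0 < N) (A : Matrix (Fin N) (Fin N) ℝ) (hA : A.IsHermitian)
    (ξ : PtCfg) (h : MemC 2 ξ)
    (u v : Fin N → ℝ) (hu : ∀ i, |u i| ≤ 1) (hv : ∀ i, |v i| ≤ 1) :
    |(N : ℝ)⁻¹ * ∑ j, ∑ k, u j * v k * A j k| ≤
      √((∑' n, (ξ.1 n) ^ 2) + ∑' n, (ξ.2 n) ^ 2) + dPt 4 (EMcfg A) ξ := by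
  have : Nonempty (Fin N) := ⟨⟨0, hN⟩⟩
  obtain ⟨i, hi⟩ := Finite.exists_max (fun i => |hA.eigenvalues i|)
  have h1 := aux_op A hA _ hi (abs_nonneg _) u v hu hv
  have hN' : (0 : ℝ) < N := by exact_mod_cast hN
  have h2 : |(N : ℝ)⁻¹ * ∑ j, ∑ k, u j * v k * A j k| ≤ |hA.eigenvalues i| := by
    rw [abs_mul, abs_of_pos (inv_pos.2 hN'), inv_mul_le_iff₀ hN']
    exact h1
  refine h2.trans ?_
  have hs1 : Summable fun n => ξ.1 n ^ 2 := by simpa using h.1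
  have hs2 : Summable fun n => ξ.2 n ^ 2 := by simpa using h.2
  have t1 : 0 ≤ ∑' n, ξ.1 n ^ 2 := tsum_nonneg fun _ => by positivity
  have t2 : 0 ≤ ∑' n, ξ.2 n ^ 2 := tsum_nonneg fun _ => by positivity
  rcases aux_mem A hA i with ⟨n, hn⟩ | ⟨n, hn⟩
  · have a1 := (aux_dist A ξ h n).1
    have a2 : |ξ.1 n| ≤ √((∑' n, (ξ.1 n) ^ 2) + ∑' n, (ξ.2 n) ^ 2) := by
      apply Real.abs_le_sqrt
      have := hs1.le_tsum n (fun _ _ => by positivity)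
      linarith
    have a3 := abs_sub_abs_le_abs_sub ((EMcfg A).1 n) (ξ.1 n)
    linarith
  · have a1 := (aux_dist A ξ h n).2
    have a2 : |ξ.2 n| ≤ √((∑' n, (ξ.1 n) ^ 2) + ∑' n, (ξ.2 n) ^ 2) := by
      apply Real.abs_le_sqrt
      have := hs2.le_tsum n (fun _ _ => by positivity)
      linarith
    have a3 := abs_sub_abs_le_abs_sub ((EMcfg A).2 n) (ξ.2 n)
    linarith

lemma aux_X {Ω : Type} [MeasurableSpace Ω] (P : Measure Ω)
    (X : ℤ → ℤ → Ω → ℝ) (hX : StatGauss P X) (j k : ℤ) : MemLp (X j k) 2 P := by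
  obtain ⟨v, hv⟩ := hX.gauss (Finsupp.single (j, k) 1)
  have h1 : (fun ω => ∑ p ∈ (Finsupp.single (j, k) (1 : ℝ)).support,
      (Finsupp.single (j, k) (1 : ℝ)) p * X p.1 p.2 ω) = X j k := by
    funext ω
    rw [Finsupp.support_single_ne_zero _ one_ne_zero]
    simp
  rw [h1] at hv
  have h2 := memLp_id_gaussianReal' (μ := 0) (v := v) 2 (by simp)
  rw [← hv, memLp_map_measure_iff (by fun_prop) (hX.meas j k).aemeasurable] at h2
  simpa using h2

lemma aux_law {Ω : Type} [MeasurableSpace Ω] (P : Measure Ω)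
    (X : ℤ → ℤ → Ω → ℝ) (hX : StatGauss P X) {ι : Type} [Fintype ι]
    (p : ι → ℤ × ℤ) (a : ι → ℝ) :
    ∃ v : NNReal, P.map (fun ω => ∑ i, a i * X (p i).1 (p i).2 ω) = gaussianReal 0 v := by
  classical
  obtain ⟨v, hv⟩ := hX.gauss (∑ i, Finsupp.single (p i) (a i))
  refine ⟨v, ?_⟩
  rw [← hv]
  congr 1
  funext ω
  change _ = (∑ i, Finsupp.single (p i) (a i)).sum (fun q r => r * X q.1 q.2 ω)
  rw [← Finsupp.sum_finsetSum_index]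
  · refine Finset.sum_congr rfl fun i _ => ?_
    rw [Finsupp.sum_single_index (by simp)]
  · simp
  · intros; ring

lemma aux_var {Ω : Type} [MeasurableSpace Ω] (P : Measure Ω)
    [IsProbabilityMeasure P] (X : ℤ → ℤ → Ω → ℝ) (ν νd : Measure (ℝ × ℝ))
    (f : ℝ × ℝ → ℝ) (hX : StatGauss P X) (hν : SpectralDecomp P X ν νd f)
    {ι : Type} [Fintype ι] (p : ι → ℤ × ℤ) (a : ι → ℝ) (x : ℝ × ℝ) :
    ∃ v : NNReal, P.map (fun ω => ∑ i, a i * X (p i).1 (p i).2 ω) = gaussianReal 0 v ∧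
      ν.real {x} * ‖∑ i, (a i : ℂ) * Complex.exp (Complex.I *
        (((p i).1 * x.1 + (p i).2 * x.2 : ℝ) : ℂ))‖ ^ 2 ≤ v := by
  obtain ⟨v, hv⟩ := aux_law P X hX p a
  refine ⟨v, hv, ?_⟩
  have := hν.finite
  have hmeas : Measurable (fun ω => ∑ i, a i * X (p i).1 (p i).2 ω) :=
    Finset.measurable_sum _ fun i _ => (hX.meas _ _).const_mul _
  have h1 : (v : ℝ) = ∫ ω, (∑ i, a i * X (p i).1 (p i).2 ω) ^ 2 ∂P := by
    have e1 := variance_fun_id_gaussianReal (μ := 0) (v := v)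
    rw [variance_of_integral_eq_zero (by fun_prop) (by simp)] at e1
    rw [← e1, ← hv, integral_map hmeas.aemeasurable (by fun_prop)]
  set g : ℝ × ℝ → ℂ := fun q => ∑ i, (a i : ℂ) * Complex.exp (Complex.I *
        (((p i).1 * q.1 + (p i).2 * q.2 : ℝ) : ℂ)) with hg
  have hgc : Continuous g := by fun_prop
  have hR : ∀ i j, ∫ ω, X (p i).1 (p i).2 ω * X (p j).1 (p j).2 ω ∂P
      = ∫ ω, X 0 0 ω * X ((p j).1 - (p i).1) ((p j).2 - (p i).2) ω ∂P := by
    intro i j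
    rw [← hX.stat (p i).1 (p i).2]
    simp
  have hint : ∀ i j, Integrable (fun ω => X (p i).1 (p i).2 ω * X (p j).1 (p j).2 ω) P :=
    fun i j => (aux_X P X hX _ _).integrable_mul (aux_X P X hX _ _)
  have h2 : (v : ℝ) = ∑ i, ∑ j, a i * a j * ∫ ω, X (p i).1 (p i).2 ω * X (p j).1 (p j).2 ω ∂P := by
    rw [h1]
    have : ∀ ω, (∑ i, a i * X (p i).1 (p i).2 ω) ^ 2 =
        ∑ i, ∑ j, a i * a j * (X (p i).1 (p i).2 ω * X (p j).1 (p j).2 ω) := by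
      intro ω
      rw [sq, Finset.sum_mul_sum]
      refine Finset.sum_congr rfl fun i _ => Finset.sum_congr rfl fun j _ => by ring
    simp_rw [this]
    rw [integral_finsetSum _ fun i _ => integrable_finsetSum _ fun j _ => (hint i j).const_mul _]
    refine Finset.sum_congr rfl fun i _ => ?_
    rw [integral_finsetSum _ fun j _ => (hint i j).const_mul _]
    refine Finset.sum_congr rfl fun j _ => ?_
    rw [integral_const_mul]
  have hbdd : ∀ (u w : ℤ), Integrable (fun q : ℝ × ℝ =>
      Complex.exp (Complex.I * ((u * q.1 + w * q.2 : ℝ) : ℂ))) ν := by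
    intro u w
    refine Integrable.of_bound (C := 1) (by fun_prop) (Eventually.of_forall fun q => ?_)
    rw [mul_comm, Complex.norm_exp_ofReal_mul_I]
  have h3 : (v : ℂ) = ∫ q, ((‖g q‖ ^ 2 : ℝ) : ℂ) ∂ν := by
    have e : ∀ q, ((‖g q‖ ^ 2 : ℝ) : ℂ) = ∑ i, ∑ j, ((a i * a j : ℝ) : ℂ) * Complex.exp (Complex.I *
        (((((p j).1 - (p i).1 : ℤ) : ℝ) * q.1 + (((p j).2 - (p i).2 : ℤ) : ℝ) * q.2 : ℝ) : ℂ)) := by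
      intro q
      rw [← Complex.normSq_eq_norm_sq, Complex.normSq_eq_conj_mul_self, hg]
      simp only [map_sum, map_mul, Complex.conj_ofReal, ← Complex.exp_conj, Complex.conj_I]
      rw [Finset.sum_mul_sum]
      refine Finset.sum_congr rfl fun i _ => Finset.sum_congr rfl fun j _ => ?_
      rw [mul_mul_mul_comm, ← Complex.exp_add]
      push_cast
      congr 2
      ring
    simp_rw [e]
    rw [integral_finsetSum _ fun i _ => integrable_finsetSum _ fun j _ => (hbdd _ _).const_mul _]
    have h2' : (v : ℂ) = ((∑ i, ∑ j, a i * a j *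
        ∫ ω, X (p i).1 (p i).2 ω * X (p j).1 (p j).2 ω ∂P : ℝ) : ℂ) := by
      rw [← h2]
    rw [h2', Complex.ofReal_sum]
    refine Finset.sum_congr rfl fun i _ => ?_
    rw [integral_finsetSum _ fun j _ => (hbdd _ _).const_mul _, Complex.ofReal_sum]
    refine Finset.sum_congr rfl fun j _ => ?_
    rw [integral_const_mul, hν.herglotz, hR, Complex.ofReal_mul]
  have h4 : (v : ℝ) = ∫ q, ‖g q‖ ^ 2 ∂ν := by
    rw [integral_complex_ofReal] at h3
    exact Complex.ofReal_injective h3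
  have hgi : Integrable (fun q => ‖g q‖ ^ 2) ν := by
    refine Integrable.of_bound (C := (∑ i, |a i|) ^ 2) (by fun_prop) (Eventually.of_forall fun q => ?_)
    rw [Real.norm_of_nonneg (by positivity)]
    gcongr
    refine (norm_sum_le _ _).trans (Finset.sum_le_sum fun i _ => ?_)
    rw [norm_mul, mul_comm Complex.I, Complex.norm_exp_ofReal_mul_I]
    simp
  rw [h4]
  calc ν.real {x} * ‖g x‖ ^ 2 = ∫ q in {x}, ‖g q‖ ^ 2 ∂ν := by
        rw [integral_singleton]; simp
    _ ≤ _ := setIntegral_le_integral hgi (Eventually.of_forall fun q => by positivity)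

lemma aux_uv (N : ℕ) (hN : 0 < N) (x : ℝ × ℝ) : ∃ u v : Fin N → ℝ, (∀ i, |u i| ≤ 1) ∧
    (∀ i, |v i| ≤ 1) ∧ 1 / 4 ≤ ‖∑ i : Fin N × Fin N,
      (((N : ℝ)⁻¹ ^ 2 * (u i.1 * v i.2 + u i.2 * v i.1) : ℝ) : ℂ) * Complex.exp (Complex.I *
        (((((i.1 : ℕ) + 1 : ℤ) : ℝ) * x.1 + (((i.2 : ℕ) + 1 : ℤ) : ℝ) * x.2 : ℝ) : ℂ))‖ := by
  by_contra hcon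
  push Not at hcon
  set c1 : Fin N → ℝ := fun i => Real.cos (((i : ℕ) + 1 : ℝ) * x.1)
  set s1 : Fin N → ℝ := fun i => Real.sin (((i : ℕ) + 1 : ℝ) * x.1)
  set c2 : Fin N → ℝ := fun i => Real.cos (((i : ℕ) + 1 : ℝ) * x.2)
  set s2 : Fin N → ℝ := fun i => Real.sin (((i : ℕ) + 1 : ℝ) * x.2)
  have k1 := hcon c1 c2 (fun _ => Real.abs_cos_le_one _) (fun _ => Real.abs_cos_le_one _)
  have k2 := hcon s1 s2 (fun _ => Real.abs_sin_le_one _) (fun _ => Real.abs_sin_le_one _)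
  have k3 := hcon s1 c2 (fun _ => Real.abs_sin_le_one _) (fun _ => Real.abs_cos_le_one _)
  have k4 := hcon c1 s2 (fun _ => Real.abs_cos_le_one _) (fun _ => Real.abs_sin_le_one _)
  set E : Fin N × Fin N → ℂ := fun i => Complex.exp (Complex.I *
        (((((i.1 : ℕ) + 1 : ℤ) : ℝ) * x.1 + (((i.2 : ℕ) + 1 : ℤ) : ℝ) * x.2 : ℝ) : ℂ)) with hE
  set T : (Fin N → ℝ) → (Fin N → ℝ) → ℂ := fun u v => ∑ i : Fin N × Fin N,
      (((N : ℝ)⁻¹ ^ 2 * (u i.1 * v i.2 + u i.2 * v i.1) : ℝ) : ℂ) * E i with hT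
  change ‖T c1 c2‖ < _ at k1
  change ‖T s1 s2‖ < _ at k2
  change ‖T s1 c2‖ < _ at k3
  change ‖T c1 s2‖ < _ at k4
  set U : Fin N → ℂ := fun i => Complex.exp (-(((i : ℕ) + 1 : ℂ) * x.1) * Complex.I) with hU
  set V : Fin N → ℂ := fun i => Complex.exp (-(((i : ℕ) + 1 : ℂ) * x.2) * Complex.I) with hV
  have hUe : ∀ i, U i = c1 i - s1 i * Complex.I := by
    intro i
    simp only [hU, c1, s1]
    rw [Complex.exp_mul_I, Complex.cos_neg, Complex.sin_neg]
    push_cast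
    ring
  have hVe : ∀ i, V i = c2 i - s2 i * Complex.I := by
    intro i
    simp only [hV, c2, s2]
    rw [Complex.exp_mul_I, Complex.cos_neg, Complex.sin_neg]
    push_cast
    ring
  have hsum : T c1 c2 - T s1 s2 - Complex.I * T s1 c2 - Complex.I * T c1 s2 =
      ∑ i : Fin N × Fin N, ((N : ℂ)⁻¹ ^ 2 * (U i.1 * V i.2 + U i.2 * V i.1)) * E i := by
    simp only [hT, Finset.mul_sum]
    rw [← Finset.sum_sub_distrib, ← Finset.sum_sub_distrib, ← Finset.sum_sub_distrib]
    refine Finset.sum_congr rfl fun i _ => ?_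
    rw [hUe, hUe, hVe, hVe]
    push_cast
    linear_combination (-(N : ℂ)⁻¹ ^ 2 * E i * (s1 i.1 * s2 i.2 + s1 i.2 * s2 i.1)) * Complex.I_sq
  set D : ℂ := ∑ j : Fin N, Complex.exp ((((j : ℕ) + 1 : ℂ) * (x.1 - x.2)) * Complex.I) with hD
  have hNC : (N : ℂ) ≠ 0 := by exact_mod_cast hN.ne'
  have hval : ∑ i : Fin N × Fin N, ((N : ℂ)⁻¹ ^ 2 * (U i.1 * V i.2 + U i.2 * V i.1)) * E i
      = ((1 + (N : ℝ)⁻¹ ^ 2 * ‖D‖ ^ 2 : ℝ) : ℂ) := by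
    have e1 : ∀ i : Fin N × Fin N, ((N : ℂ)⁻¹ ^ 2 * (U i.1 * V i.2 + U i.2 * V i.1)) * E i =
        (N : ℂ)⁻¹ ^ 2 + (N : ℂ)⁻¹ ^ 2 * (
          Complex.exp ((((i.1 : ℕ) + 1 : ℂ) * (x.1 - x.2)) * Complex.I) *
          (starRingEnd ℂ) (Complex.exp ((((i.2 : ℕ) + 1 : ℂ) * (x.1 - x.2)) * Complex.I))) := by
      intro i
      have a1 : U i.1 * V i.2 * E i = 1 := by
        simp only [hU, hV, hE]
        rw [← Complex.exp_add, ← Complex.exp_add]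
        convert Complex.exp_zero using 2
        push_cast
        ring
      have a2 : U i.2 * V i.1 * E i = Complex.exp ((((i.1 : ℕ) + 1 : ℂ) * (x.1 - x.2)) * Complex.I) *
          (starRingEnd ℂ) (Complex.exp ((((i.2 : ℕ) + 1 : ℂ) * (x.1 - x.2)) * Complex.I)) := by
        simp only [hU, hV, hE]
        rw [← Complex.exp_conj, ← Complex.exp_add, ← Complex.exp_add, ← Complex.exp_add]
        congr 1
        simp only [map_mul, map_add, map_sub, map_one, Complex.conj_ofReal, Complex.conj_I,
          Complex.conj_natCast]
        push_cast
        ring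
      rw [← a2]
      linear_combination (N : ℂ)⁻¹ ^ 2 * a1
    simp_rw [e1]
    rw [Finset.sum_add_distrib, ← Finset.mul_sum]
    have e2 : (∑ i : Fin N × Fin N, 
          Complex.exp ((((i.1 : ℕ) + 1 : ℂ) * (x.1 - x.2)) * Complex.I) *
          (starRingEnd ℂ) (Complex.exp ((((i.2 : ℕ) + 1 : ℂ) * (x.1 - x.2)) * Complex.I))) =
          ((‖D‖ ^ 2 : ℝ) : ℂ) := by
      rw [← Complex.normSq_eq_norm_sq, ← Complex.mul_conj, hD, map_sum, Finset.sum_mul_sum,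
        Fintype.sum_prod_type]
    rw [e2]
    simp only [Finset.sum_const, Finset.card_univ, Fintype.card_prod, Fintype.card_fin, nsmul_eq_mul]
    push_cast
    field_simp
  have hge : 1 ≤ ‖T c1 c2 - T s1 s2 - Complex.I * T s1 c2 - Complex.I * T c1 s2‖ := by
    rw [hsum, hval, Complex.norm_real, Real.norm_of_nonneg (by positivity)]
    have : 0 ≤ (N : ℝ)⁻¹ ^ 2 * ‖D‖ ^ 2 := by positivity
    linarith
  have hle : ‖T c1 c2 - T s1 s2 - Complex.I * T s1 c2 - Complex.I * T c1 s2‖ ≤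
      ‖T c1 c2‖ + ‖T s1 s2‖ + ‖T s1 c2‖ + ‖T c1 s2‖ := by
    refine (norm_sub_le _ _).trans ?_
    rw [norm_mul, Complex.norm_I, one_mul]
    gcongr
    refine (norm_sub_le _ _).trans ?_
    rw [norm_mul, Complex.norm_I, one_mul]
    gcongr
    exact norm_sub_le _ _
  linarith

lemma aux_gauss (s v : NNReal) (hs : 0 < s) (hsv : s ≤ v) (t : ℝ) :
    gaussianReal 0 v {z | |z| ≤ t} ≤ gaussianReal 0 s {z | |z| ≤ t} := by
  have hs' : (0 : ℝ) < s := hs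
  have h := gaussianReal_map_const_mul (μ := 0) (v := s) (√(v / s))
  have hsv' : (s : ℝ) ≤ v := hsv
  have hv : (NNReal.mk (√(v / s) ^ 2) (sq_nonneg _)) * s = v := by
    apply NNReal.coe_injective
    push_cast
    change √(v / s) ^ 2 * (s : ℝ) = v
    rw [Real.sq_sqrt (by positivity)]
    field_simp
  rw [hv, mul_zero] at h
  rw [← h, Measure.map_apply (by fun_prop) (measurableSet_le (by fun_prop) (by fun_prop))]
  refine measure_mono fun z hz => ?_
  simp only [Set.mem_preimage, Set.mem_ofPred_eq, abs_mul] at hz ⊢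
  have h1 : 1 ≤ |√(v / s)| := by
    rw [abs_of_nonneg (Real.sqrt_nonneg _)]
    apply Real.one_le_sqrt.2
    rwa [le_div_iff₀ hs', one_mul]
  nlinarith [abs_nonneg z]

lemma aux_gauss_lt (s : NNReal) (hs : 0 < s) (t : ℝ) : gaussianReal 0 s {z | |z| ≤ t} < 1 := by
  have hm : MeasurableSet {z : ℝ | |z| ≤ t} := measurableSet_le (by fun_prop) (by fun_prop)
  rw [lt_iff_le_and_ne]
  refine ⟨prob_le_one, fun h => ?_⟩
  rw [← prob_compl_eq_zero_iff hm] at h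
  have h2 := gaussianReal_absolutelyContinuous' 0 hs.ne' h
  have h3 : volume (Set.Ioi t) = 0 := measure_mono_null (fun z hz => by
    simp only [Set.mem_compl_iff, Set.mem_ofPred_eq, not_le]
    exact lt_of_lt_of_le hz (le_abs_self z)) h2
  simp at h3

lemma aux_gauss_tend (s : NNReal) (hs : 0 < s) :
    Tendsto (fun n : ℕ => gaussianReal 0 s {z | |z| ≤ 1 / ((n : ℝ) + 1)}) atTop (nhds 0) := by
  have h := tendsto_measure_iInter_atTop (μ := gaussianReal 0 s)
    (s := fun n : ℕ => {z : ℝ | |z| ≤ 1 / ((n : ℝ) + 1)})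
    (fun n => (measurableSet_le (by fun_prop) (by fun_prop)).nullMeasurableSet)
    (fun m n hmn z hz => by
      simp only [Set.mem_ofPred_eq] at hz ⊢
      exact le_trans hz (Nat.one_div_le_one_div hmn)) ⟨0, measure_ne_top _ _⟩
  have h0 : (⋂ n : ℕ, {z : ℝ | |z| ≤ 1 / ((n : ℝ) + 1)}) ⊆ {0} := by
    intro z hz
    simp only [Set.mem_iInter, Set.mem_ofPred_eq] at hz
    have := ge_of_tendsto' tendsto_one_div_add_atTop_nhds_zero_nat hz
    simpa using this
  have h1 : gaussianReal 0 s (⋂ n : ℕ, {z : ℝ | |z| ≤ 1 / ((n : ℝ) + 1)}) = 0 :=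
    measure_mono_null h0 (gaussianReal_absolutelyContinuous 0 hs.ne' (by simp))
  rw [h1] at h
  exact h

lemma aux_atom {Ω : Type} [MeasurableSpace Ω] (P : Measure Ω)
    (X : ℤ → ℤ → Ω → ℝ) (ν νd : Measure (ℝ × ℝ))
    (f : ℝ × ℝ → ℝ) (hν : SpectralDecomp P X ν νd f)
    (hνd : 0 < νd specBox) : ∃ x, 0 < ν.real {x} := by
  have := hν.finite
  obtain ⟨s, hs, h0⟩ := hν.discrete
  by_contra hcon
  push Not at hcon
  have h1 : ∀ x, νd {x} = 0 := by
    intro x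
    have h2 : ν {x} = 0 := by
      have := le_antisymm (hcon x) measureReal_nonneg
      rwa [measureReal_eq_zero_iff] at this
    rw [hν.decomp, Measure.add_apply] at h2
    exact (add_eq_zero.1 h2).2
  have h3 : νd s = 0 := by
    rw [← Set.biUnion_of_singleton s]
    exact (measure_biUnion_null_iff hs).2 fun x _ => h1 x
  have h4 : νd Set.univ = 0 := by
    rw [← Set.union_compl_self s]
    exact measure_union_null h3 h0
  exact hνd.ne' (measure_mono_null (Set.subset_univ _) h4)

lemma aux_main {Ω : Type} [MeasurableSpace Ω] (P : Measure Ω)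
    [IsProbabilityMeasure P] (X : ℤ → ℤ → Ω → ℝ) (ν νd : Measure (ℝ × ℝ))
    (f : ℝ × ℝ → ℝ) (hX : StatGauss P X) (hν : SpectralDecomp P X ν νd f)
    (hνd : 0 < νd specBox)
    (ξ : Ω → PtCfg) (hξmem : ∀ᵐ ω ∂P, MemC 2 (ξ ω))
    (hξconv : ∀ ε > 0, Tendsto
      (fun N => P {ω | ε ≤ dPt 4 (EMcfg (scaledW1 X N ω)) (ξ ω)})
      atTop (nhds 0)) :
    ∃ s : NNReal, 0 < s ∧ ∀ t ε : ℝ, 0 < ε →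
      P {ω | √((∑' n, ((ξ ω).1 n) ^ 2) + ∑' n, ((ξ ω).2 n) ^ 2) ≤ t} ≤
        gaussianReal 0 s {z | |z| ≤ t + ε} := by
  obtain ⟨x, hx⟩ := aux_atom P X ν νd f hν hνd
  set s : NNReal := ⟨ν.real {x} * (1 / 4) ^ 2, by positivity⟩ with hsdef
  have hs : (s : ℝ) = ν.real {x} * (1 / 4) ^ 2 := rfl
  have hs0 : 0 < s := by
    rw [← NNReal.coe_pos, hs]; positivity
  refine ⟨s, hs0, fun t ε hε => ?_⟩
  have hlim := (tendsto_const_nhds (x := gaussianReal 0 s {z | |z| ≤ t + ε})).add (hξconv ε hε)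
  rw [add_zero] at hlim
  refine ge_of_tendsto hlim ?_
  filter_upwards [eventually_gt_atTop 0] with N hN
  obtain ⟨u, v, hu, hv, huv⟩ := aux_uv N hN x
  obtain ⟨w, hw, hwv⟩ := aux_var P X ν νd f hX hν
    (fun i : Fin N × Fin N => (((i.1 : ℕ) + 1 : ℤ), ((i.2 : ℕ) + 1 : ℤ)))
    (fun i => (N : ℝ)⁻¹ ^ 2 * (u i.1 * v i.2 + u i.2 * v i.1)) x
  have hsw : s ≤ w := by
    rw [← NNReal.coe_le_coe, hs]
    refine le_trans ?_ hwv
    gcongr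
  set Z : Ω → ℝ := fun ω => ∑ i : Fin N × Fin N,
    (N : ℝ)⁻¹ ^ 2 * (u i.1 * v i.2 + u i.2 * v i.1) *
      X ((i.1 : ℕ) + 1 : ℤ) ((i.2 : ℕ) + 1 : ℤ) ω with hZ
  have hZm : Measurable Z := Finset.measurable_sum _ fun i _ => (hX.meas _ _).const_mul _
  have hZe : ∀ ω, Z ω = (N : ℝ)⁻¹ * ∑ j, ∑ k, u j * v k * scaledW1 X N ω j k := by
    intro ω
    have e1 : Z ω = ∑ j : Fin N, ∑ k : Fin N, (N : ℝ)⁻¹ ^ 2 * (u j * v k) *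
          X ((j : ℕ) + 1 : ℤ) ((k : ℕ) + 1 : ℤ) ω +
        ∑ j : Fin N, ∑ k : Fin N, (N : ℝ)⁻¹ ^ 2 * (u k * v j) *
          X ((j : ℕ) + 1 : ℤ) ((k : ℕ) + 1 : ℤ) ω := by
      rw [hZ, ← Finset.sum_add_distrib]
      simp only [Fintype.sum_prod_type]
      refine Finset.sum_congr rfl fun j _ => ?_
      rw [← Finset.sum_add_distrib]
      refine Finset.sum_congr rfl fun k _ => ?_
      ring
    rw [e1, Finset.sum_comm (f := fun j k : Fin N => (N : ℝ)⁻¹ ^ 2 * (u k * v j) *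
          X ((j : ℕ) + 1 : ℤ) ((k : ℕ) + 1 : ℤ) ω), ← Finset.sum_add_distrib, Finset.mul_sum]
    refine Finset.sum_congr rfl fun j _ => ?_
    rw [← Finset.sum_add_distrib, Finset.mul_sum]
    refine Finset.sum_congr rfl fun k _ => ?_
    simp only [scaledW1]
    ring
  have hherm : ∀ ω, (scaledW1 X N ω).IsHermitian := by
    intro ω
    ext j k
    simp only [Matrix.conjTranspose_apply, scaledW1, star_trivial]
    rw [add_comm]
  have hnull : P {ω | ¬ MemC 2 (ξ ω)} = 0 := hξmem
  have hsub : {ω | √((∑' n, ((ξ ω).1 n) ^ 2) + ∑' n, ((ξ ω).2 n) ^ 2) ≤ t} ⊆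
      ((Z ⁻¹' {z | |z| ≤ t + ε}) ∪ {ω | ε ≤ dPt 4 (EMcfg (scaledW1 X N ω)) (ξ ω)}) ∪
        {ω | ¬ MemC 2 (ξ ω)} := by
    intro ω hω
    by_cases h1 : MemC 2 (ξ ω)
    · by_cases h2 : ε ≤ dPt 4 (EMcfg (scaledW1 X N ω)) (ξ ω)
      · exact Or.inl (Or.inr h2)
      · refine Or.inl (Or.inl ?_)
        have h3 := aux_lower hN _ (hherm ω) (ξ ω) h1 u v hu hv
        rw [← hZe ω] at h3
        simp only [Set.mem_ofPred_eq, Set.mem_preimage] at hω ⊢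
        push Not at h2
        linarith
    · exact Or.inr h1
  refine (measure_mono hsub).trans ?_
  refine (measure_union_le _ _).trans ?_
  rw [hnull, add_zero]
  refine (measure_union_le _ _).trans ?_
  gcongr
  rw [← Measure.map_apply hZm (measurableSet_le (by fun_prop) (by fun_prop)), hw]
  exact aux_gauss s w hs0 hsw _

/-- **Theorem 7.** If `ν_d((-π,π]²) > 0`, then `∫ x² ξ(dx)` is almost surely
strictly positive and is a non-degenerate random variable. -/
theorem statement7 {Ω : Type} [MeasurableSpace Ω] (P : Measure Ω)
    [IsProbabilityMeasure P] (X : ℤ → ℤ → Ω → ℝ) (ν νd : Measure (ℝ × ℝ))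
    (f : ℝ × ℝ → ℝ) (hX : StatGauss P X) (hν : SpectralDecomp P X ν νd f)
    (hνd : 0 < νd specBox)
    (ξ : Ω → PtCfg) (hξmem : ∀ᵐ ω ∂P, MemC 2 (ξ ω))
    (hξconv : ∀ ε > 0, Tendsto
      (fun N => P {ω | ε ≤ dPt 4 (EMcfg (scaledW1 X N ω)) (ξ ω)})
      atTop (nhds 0)) :
    (∀ᵐ ω ∂P, 0 < (∑' n, ((ξ ω).1 n) ^ 2) + ∑' n, ((ξ ω).2 n) ^ 2) ∧
    ¬∃ c : ℝ,
      (fun ω => (∑' n, ((ξ ω).1 n) ^ 2) + ∑' n, ((ξ ω).2 n) ^ 2)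
        =ᵐ[P] fun _ => c := by
  obtain ⟨s, hs, h⟩ := aux_main P X ν νd f hX hν hνd ξ hξmem hξconv
  constructor
  · rw [ae_iff]
    have h0 : P {ω | √((∑' n, ((ξ ω).1 n) ^ 2) + ∑' n, ((ξ ω).2 n) ^ 2) ≤ 0} ≤ 0 := by
      refine ge_of_tendsto' (aux_gauss_tend s hs) fun n => ?_
      have := h 0 (1 / ((n : ℝ) + 1)) (by positivity)
      rwa [zero_add] at this
    refine measure_mono_null (fun ω hω => ?_) (le_antisymm h0 zero_le)
    simp only [Set.mem_ofPred_eq, not_lt] at hω ⊢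
    rw [Real.sqrt_eq_zero_of_nonpos hω]
  · rintro ⟨c, hc⟩
    have h1 := h (√c) 1 one_pos
    have h2 : P {ω | √((∑' n, ((ξ ω).1 n) ^ 2) + ∑' n, ((ξ ω).2 n) ^ 2) ≤ √c} = 1 := by
      rw [← measure_univ (μ := P)]
      refine measure_congr ?_
      filter_upwards [hc] with ω hω
      refine propext ⟨fun _ => trivial, fun _ => ?_⟩
      change √((∑' n, ((ξ ω).1 n) ^ 2) + ∑' n, ((ξ ω).2 n) ^ 2) ≤ √c
      rw [hω]
    rw [h2] at h1
    exact absurd (aux_gauss_lt s hs (√c + 1)) (not_lt.2 h1)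

end
end

section
/- Suppose for each 1 ≤ n ≤ ∞, g_n is a nonnegative, integrable, even function on [−π,π]² (i.e., g_n(x,y) = g_n(−x,−y) for almost all x,y), and g_n → g_∞ in L¹([−π,π]²) as n → ∞. For each n let μ_{g_n} denote the deterministic probability measure to which ESD(W_N/√N) converges weakly in probability when the input process is a centered stationary Gaussian process with spectral measure g_n(x,y) dx dy. Then μ_{g_n} converges weakly to μ_{g_∞} as n → ∞. -/
open MeasureTheory ProbabilityTheory Filter Real

noncomputable section

/-- The process `X` has absolutely continuous spectral measure with density
`h` on `(-π,π]²`: `E[X_{0,0} X_{u,v}] = ∫∫ e^{i(ux+vy)} h(x,y) dx dy`. -/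
def HasSpecDensity {Ω : Type*} [MeasurableSpace Ω] (P : Measure Ω)
    (X : ℤ → ℤ → Ω → ℝ) (h : ℝ × ℝ → ℝ) : Prop :=
  ∀ u v : ℤ,
    (∫ q in specBox,
        Complex.exp (Complex.I * ((u * q.1 + v * q.2 : ℝ) : ℂ)) * ((h q : ℝ) : ℂ))
      = ((∫ ω, X 0 0 ω * X u v ω ∂P : ℝ) : ℂ)

/-- `μ` is the limiting spectral distribution of the matrices `W_N/√N` built
from some centered stationary Gaussian process whose spectral measure is
absolutely continuous with density `h`. -/
def IsLSDofDensity (h : ℝ × ℝ → ℝ) (μ : Measure ℝ) : Prop :=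
  ∃ (Ω : Type) (_ : MeasurableSpace Ω) (P : Measure Ω),
    IsProbabilityMeasure P ∧ ∃ X : ℤ → ℤ → Ω → ℝ,
      StatGauss P X ∧ HasSpecDensity P X h ∧ ESDTendstoInProb P (scaledW X) μ

lemma hw_aux {N : ℕ} {A B : Matrix (Fin N) (Fin N) ℝ} (hA : A.IsHermitian) (hB : B.IsHermitian)
    (F : ℝ → ℝ) (L : ℝ) (hL0 : 0 ≤ L) (hL : ∀ x y, |F x - F y| ≤ L * |x - y|) :
    |∑ j, F (hA.eigenvalues j) - ∑ j, F (hB.eigenvalues j)| ≤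
      L * (Real.sqrt N * Real.sqrt (∑ i, ∑ j, (A i j - B i j) ^ 2)) := by
  set u := hA.eigenvectorBasis
  set v := hB.eigenvectorBasis
  set a := hA.eigenvalues
  set b := hB.eigenvalues
  have hu : ∀ i, ∑ j, (inner ℝ (u i) (v j)) ^ 2 = 1 := by
    intro i
    have := v.sum_sq_norm_inner_left (u i)
    simpa [u.norm_eq_one] using this
  have hv : ∀ j, ∑ i, (inner ℝ (u i) (v j)) ^ 2 = 1 := by
    intro j
    have := u.sum_sq_norm_inner_right (v j)
    simpa [v.norm_eq_one] using this
  have h1 : ∑ j, F (a j) - ∑ j, F (b j) =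
      ∑ i, ∑ j, (F (a i) - F (b j)) * (inner ℝ (u i) (v j)) ^ 2 := by
    simp_rw [sub_mul, Finset.sum_sub_distrib]
    congr 1
    · simp_rw [← Finset.mul_sum, hu, mul_one]
    · rw [Finset.sum_comm]
      simp_rw [← Finset.mul_sum, hv, mul_one]
  have hD : ∀ i j, inner ℝ (u i) (Matrix.toEuclideanLin (A - B) (v j)) =
      (a i - b j) * inner ℝ (u i) (v j) := by
    intro i j
    have e1 : Matrix.toEuclideanLin B (v j) = b j • v j := by
      ext k
      have := congrFun (hB.mulVec_eigenvectorBasis j) k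
      simpa [Matrix.toEuclideanLin] using this
    have e2 : Matrix.toEuclideanLin A (u i) = a i • u i := by
      ext k
      have := congrFun (hA.mulVec_eigenvectorBasis i) k
      simpa [Matrix.toEuclideanLin] using this
    have hs := Matrix.isSymmetric_toEuclideanLin_iff.2 hA
    have e3 : inner ℝ (u i) (Matrix.toEuclideanLin A (v j)) = a i * inner ℝ (u i) (v j) := by
      rw [← hs, e2, inner_smul_left]; simp
    rw [map_sub, LinearMap.sub_apply, inner_sub_right, e3, e1, inner_smul_right, sub_mul]
  have h2 : ∑ i, ∑ j, (a i - b j) ^ 2 * (inner ℝ (u i) (v j)) ^ 2 =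
      ∑ i, ∑ j, (A i j - B i j) ^ 2 := by
    simp_rw [← mul_pow, ← hD]
    rw [Finset.sum_comm]
    have : ∀ j, ∑ i, (inner ℝ (u i) (Matrix.toEuclideanLin (A - B) (v j))) ^ 2 =
        ∑ k, (inner ℝ (WithLp.toLp 2 (fun l => A k l - B k l) : EuclideanSpace ℝ (Fin N)) (v j)) ^ 2 := by
      intro j
      have := u.sum_sq_norm_inner_right (Matrix.toEuclideanLin (A - B) (v j))
      simp only [Real.norm_eq_abs, sq_abs] at this
      rw [this, EuclideanSpace.norm_sq_eq]
      refine Finset.sum_congr rfl fun k _ => ?_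
      simp [Matrix.toEuclideanLin, Matrix.mulVec, dotProduct, PiLp.inner_apply, mul_comm, ← Finset.sum_sub_distrib, sub_mul]
    simp_rw [this]
    rw [Finset.sum_comm]
    refine Finset.sum_congr rfl fun k _ => ?_
    have := v.sum_sq_norm_inner_left (WithLp.toLp 2 (fun l => A k l - B k l) : EuclideanSpace ℝ (Fin N))
    simp only [Real.norm_eq_abs, sq_abs] at this
    rw [this, EuclideanSpace.norm_sq_eq]
    simp
  have h3 : ∑ i, ∑ j, |a i - b j| * (inner ℝ (u i) (v j)) ^ 2 ≤
      Real.sqrt N * Real.sqrt (∑ i, ∑ j, (A i j - B i j) ^ 2) := by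
    rw [← h2]
    have hc := Real.sum_mul_le_sqrt_mul_sqrt (Finset.univ : Finset (Fin N × Fin N))
      (fun p => |inner ℝ (u p.1) (v p.2)|) (fun p => |a p.1 - b p.2| * |inner ℝ (u p.1) (v p.2)|)
    simp only [Fintype.sum_prod_type, mul_pow, sq_abs, hu] at hc
    simp only [Finset.sum_const, Finset.card_univ, Fintype.card_fin, nsmul_eq_mul, mul_one] at hc
    refine le_trans (le_of_eq ?_) hc
    refine Finset.sum_congr rfl fun i _ => Finset.sum_congr rfl fun j _ => ?_
    rw [← sq_abs (inner ℝ (u i) (v j))]; ring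
  rw [h1]
  calc _ ≤ ∑ i, ∑ j, |(F (a i) - F (b j)) * (inner ℝ (u i) (v j)) ^ 2| :=
        (Finset.abs_sum_le_sum_abs _ _).trans
          (Finset.sum_le_sum fun i _ => Finset.abs_sum_le_sum_abs _ _)
    _ ≤ ∑ i, ∑ j, L * (|a i - b j| * (inner ℝ (u i) (v j)) ^ 2) := by
        refine Finset.sum_le_sum fun i _ => Finset.sum_le_sum fun j _ => ?_
        rw [abs_mul, abs_of_nonneg (sq_nonneg (inner ℝ (u i) (v j))), ← mul_assoc]
        exact mul_le_mul_of_nonneg_right (hL _ _) (sq_nonneg _)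
    _ = L * ∑ i, ∑ j, (|a i - b j| * (inner ℝ (u i) (v j)) ^ 2) := by
        simp_rw [Finset.mul_sum]
    _ ≤ _ := mul_le_mul_of_nonneg_left h3 hL0

def matOf {N : ℕ} (x : EuclideanSpace ℝ (Fin N × Fin N)) : Matrix (Fin N) (Fin N) ℝ :=
  fun i j => (Real.sqrt N)⁻¹ * (x (i, j) + x (j, i))

def vecOf {Ω : Type*} (X : ℤ → ℤ → Ω → ℝ) (N : ℕ) (ω : Ω) : EuclideanSpace ℝ (Fin N × Fin N) :=
  WithLp.toLp 2 fun p => X ((p.1 : ℕ) + 1) ((p.2 : ℕ) + 1) ω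

lemma scaledW_eq {Ω : Type*} (X : ℤ → ℤ → Ω → ℝ) (N : ℕ) (ω : Ω) :
    scaledW X N ω = matOf (vecOf X N ω) := rfl

lemma matOf_herm {N : ℕ} (x : EuclideanSpace ℝ (Fin N × Fin N)) : (matOf x).IsHermitian := by
  ext i j
  simp [matOf, add_comm]

lemma esd_lip {N : ℕ} (F : ℝ → ℝ) (L : ℝ) (hL0 : 0 ≤ L)
    (hL : ∀ x y, |F x - F y| ≤ L * |x - y|) (x y : EuclideanSpace ℝ (Fin N × Fin N)) :
    |esdEval (matOf x) F - esdEval (matOf y) F| ≤ 2 * L / N * ‖x - y‖ := by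
  rcases Nat.eq_zero_or_pos N with rfl | hN
  · simp [esdEval]
  have hN' : (0 : ℝ) < N := by exact_mod_cast hN
  have hs : 0 < Real.sqrt N := Real.sqrt_pos.2 hN'
  rw [esdEval, esdEval, dif_pos (matOf_herm x), dif_pos (matOf_herm y), ← mul_sub, abs_mul,
    abs_of_pos (inv_pos.2 hN')]
  have h := hw_aux (matOf_herm x) (matOf_herm y) F L hL0 hL
  have h4 : Real.sqrt (∑ i, ∑ j, (matOf x i j - matOf y i j) ^ 2) ≤ (Real.sqrt N)⁻¹ * (2 * ‖x - y‖) := by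
    apply Real.sqrt_le_iff.2 ⟨by positivity, ?_⟩
    have e : ‖x - y‖ ^ 2 = ∑ i, ∑ j, (x (i, j) - y (i, j)) ^ 2 := by
      rw [EuclideanSpace.norm_sq_eq, Fintype.sum_prod_type]
      simp
    have e' : ‖x - y‖ ^ 2 = ∑ i, ∑ j, (x (j, i) - y (j, i)) ^ 2 := by
      rw [e, Finset.sum_comm]
    rw [mul_pow, mul_pow]
    have : (2 : ℝ) ^ 2 * ‖x - y‖ ^ 2 = 2 * ‖x - y‖ ^ 2 + 2 * ‖x - y‖ ^ 2 := by ring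
    rw [this]
    nth_rw 1 [e]
    rw [e']
    simp_rw [Finset.mul_sum]
    rw [← Finset.sum_add_distrib]
    simp_rw [← Finset.sum_add_distrib]
    rw [Finset.mul_sum]
    simp_rw [Finset.mul_sum]
    refine Finset.sum_le_sum fun i _ => Finset.sum_le_sum fun j _ => ?_
    have : (matOf x i j - matOf y i j) ^ 2 =
      (Real.sqrt N)⁻¹ ^ 2 * ((x (i, j) - y (i, j)) + (x (j, i) - y (j, i))) ^ 2 := by
      simp only [matOf]; ring
    rw [this]
    apply mul_le_mul_of_nonneg_left _ (by positivity)
    nlinarith [sq_nonneg ((x (i, j) - y (i, j)) - (x (j, i) - y (j, i)))]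
  calc _ ≤ (N : ℝ)⁻¹ * (L * (Real.sqrt N * ((Real.sqrt N)⁻¹ * (2 * ‖x - y‖)))) := by
        apply mul_le_mul_of_nonneg_left _ (by positivity)
        refine h.trans ?_
        gcongr
    _ = _ := by field_simp

lemma esd_bdd {N : ℕ} (F : ℝ → ℝ) (C : ℝ) (hC : ∀ x, |F x| ≤ C)
    (x : EuclideanSpace ℝ (Fin N × Fin N)) : |esdEval (matOf x) F| ≤ C := by
  have hC0 : 0 ≤ C := (abs_nonneg _).trans (hC 0)
  rcases Nat.eq_zero_or_pos N with rfl | hN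
  · simp [esdEval, hC0]
  have hN' : (0 : ℝ) < N := by exact_mod_cast hN
  rw [esdEval, dif_pos (matOf_herm x), abs_mul, abs_of_pos (inv_pos.2 hN'), inv_mul_le_iff₀ hN']
  refine (Finset.abs_sum_le_sum_abs _ _).trans ?_
  refine (Finset.sum_le_sum fun i _ => hC _).trans ?_
  simp

lemma esd_cont {N : ℕ} (F : ℝ → ℝ) (L : ℝ) (hL0 : 0 ≤ L)
    (hL : ∀ x y, |F x - F y| ≤ L * |x - y|) :
    Continuous (fun x : EuclideanSpace ℝ (Fin N × Fin N) => esdEval (matOf x) F) := by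
  have : LipschitzWith (Real.toNNReal (2 * L / N))
      (fun x : EuclideanSpace ℝ (Fin N × Fin N) => esdEval (matOf x) F) := by
    apply LipschitzWith.of_dist_le_mul
    intro x y
    rw [Real.dist_eq, dist_eq_norm, Real.coe_toNNReal _ (by positivity)]
    exact esd_lip F L hL0 hL x y
  exact this.continuous

def cMat (N : ℕ) (h : ℝ × ℝ → ℝ) : Matrix (Fin N × Fin N) (Fin N × Fin N) ℝ :=
  fun p q => ∫ z in specBox, Real.cos ((((q.1 : ℕ) : ℝ) - ((p.1 : ℕ) : ℝ)) * z.1 +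
    (((q.2 : ℕ) : ℝ) - ((p.2 : ℕ) : ℝ)) * z.2) * h z

lemma cos_int {h : ℝ × ℝ → ℝ} (hi : IntegrableOn h specBox volume) (a b : ℝ) :
    IntegrableOn (fun z : ℝ × ℝ => Real.cos (a * z.1 + b * z.2) * h z) specBox volume := by
  refine Integrable.bdd_mul (c := 1) hi (by fun_prop) ?_
  exact ae_of_all _ fun z => by simpa using Real.abs_cos_le_one _

lemma cMat_add (N : ℕ) {h k : ℝ × ℝ → ℝ} (hi : IntegrableOn h specBox volume)
    (ki : IntegrableOn k specBox volume) :
    cMat N (fun z => h z + k z) = cMat N h + cMat N k := by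
  ext p q
  simp only [cMat, Matrix.add_apply]
  rw [← integral_add (cos_int hi _ _) (cos_int ki _ _)]
  simp_rw [mul_add]

lemma cMat_trace (N : ℕ) (h : ℝ × ℝ → ℝ) (p : Fin N × Fin N) :
    cMat N h p p = ∫ z in specBox, h z := by
  simp [cMat]

lemma cMat_psd (N : ℕ) {h : ℝ × ℝ → ℝ} (hi : IntegrableOn h specBox volume) (h0 : ∀ z, 0 ≤ h z) :
    (cMat N h).PosSemidef := by
  refine Matrix.PosSemidef.of_dotProduct_mulVec_nonneg ?_ ?_
  · ext p q
    simp only [cMat, Matrix.conjTranspose_apply, star_trivial]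
    congr 1
    ext z
    rw [← Real.cos_neg]
    congr 2
    ring
  · intro x
    have : star x ⬝ᵥ (cMat N h).mulVec x = ∫ z in specBox,
        ((∑ p, x p * Real.cos (((p.1 : ℕ) : ℝ) * z.1 + ((p.2 : ℕ) : ℝ) * z.2)) ^ 2 +
        (∑ p, x p * Real.sin (((p.1 : ℕ) : ℝ) * z.1 + ((p.2 : ℕ) : ℝ) * z.2)) ^ 2) * h z := by
      simp only [dotProduct, Matrix.mulVec, star_trivial, cMat]
      simp_rw [Finset.mul_sum]
      have : ∀ p q : Fin N × Fin N, x p * ((∫ z in specBox, Real.cos ((((q.1 : ℕ) : ℝ) - ((p.1 : ℕ) : ℝ)) * z.1 +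
          (((q.2 : ℕ) : ℝ) - ((p.2 : ℕ) : ℝ)) * z.2) * h z) * x q) =
          ∫ z in specBox, (x p * x q) * (Real.cos ((((q.1 : ℕ) : ℝ) - ((p.1 : ℕ) : ℝ)) * z.1 +
          (((q.2 : ℕ) : ℝ) - ((p.2 : ℕ) : ℝ)) * z.2) * h z) := by
        intro p q
        rw [integral_const_mul]; ring
      simp_rw [this]
      have hint : ∀ p q : Fin N × Fin N, IntegrableOn (fun z : ℝ × ℝ => (x p * x q) * (Real.cos ((((q.1 : ℕ) : ℝ) - ((p.1 : ℕ) : ℝ)) * z.1 +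
          (((q.2 : ℕ) : ℝ) - ((p.2 : ℕ) : ℝ)) * z.2) * h z)) specBox volume := fun p q =>
        (cos_int hi _ _).const_mul _
      have e1 : ∀ p : Fin N × Fin N, ∑ q, ∫ z in specBox, (x p * x q) * (Real.cos ((((q.1 : ℕ) : ℝ) - ((p.1 : ℕ) : ℝ)) * z.1 +
          (((q.2 : ℕ) : ℝ) - ((p.2 : ℕ) : ℝ)) * z.2) * h z) = ∫ z in specBox, ∑ q, (x p * x q) * (Real.cos ((((q.1 : ℕ) : ℝ) - ((p.1 : ℕ) : ℝ)) * z.1 +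
          (((q.2 : ℕ) : ℝ) - ((p.2 : ℕ) : ℝ)) * z.2) * h z) := fun p =>
        (integral_finsetSum _ fun q _ => hint p q).symm
      simp_rw [e1]
      rw [← integral_finsetSum _ fun p _ => integrable_finsetSum _ fun q _ => hint p q]
      congr 1
      ext z
      rw [sq, sq, Finset.sum_mul_sum, Finset.sum_mul_sum, ← Finset.sum_add_distrib, Finset.sum_mul]
      refine Finset.sum_congr rfl fun p _ => ?_
      rw [← Finset.sum_add_distrib, Finset.sum_mul]
      refine Finset.sum_congr rfl fun q _ => ?_
      have : (((q.1 : ℕ) : ℝ) - ((p.1 : ℕ) : ℝ)) * z.1 + (((q.2 : ℕ) : ℝ) - ((p.2 : ℕ) : ℝ)) * z.2 =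
        (((q.1 : ℕ) : ℝ) * z.1 + ((q.2 : ℕ) : ℝ) * z.2) - (((p.1 : ℕ) : ℝ) * z.1 + ((p.2 : ℕ) : ℝ) * z.2) := by ring
      rw [this, Real.cos_sub]
      ring
    rw [this]
    exact integral_nonneg fun z => mul_nonneg (by positivity) (h0 z)

lemma mg_conv {ι : Type*} [Fintype ι] [DecidableEq ι] {S T : Matrix ι ι ℝ} (hS : S.PosSemidef)
    (hT : T.PosSemidef) : multivariateGaussian (0 : EuclideanSpace ℝ ι) (S + T) =
      (multivariateGaussian 0 S) ∗ (multivariateGaussian 0 T) := by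
  apply Measure.ext_of_charFun
  ext t
  rw [charFun_conv, charFun_multivariateGaussian (hS.add hT), charFun_multivariateGaussian hS,
    charFun_multivariateGaussian hT, ← Complex.exp_add]
  congr 1
  simp [Matrix.add_mulVec, dotProduct_add]
  ring

lemma mg_norm {ι : Type*} [Fintype ι] [DecidableEq ι] {S : Matrix ι ι ℝ} (hS : S.PosSemidef) :
    ∫ y, ‖y‖ ∂(multivariateGaussian (0 : EuclideanSpace ℝ ι) S) ≤ Real.sqrt (∑ i, S i i) := by
  set γ := multivariateGaussian (0 : EuclideanSpace ℝ ι) S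
  have hm : MemLp (fun y : EuclideanSpace ℝ ι => y) 2 γ := IsGaussian.memLp_two_id
  have hmi : ∀ i, MemLp (fun y : EuclideanSpace ℝ ι => y i) 2 γ := fun i =>
    (EuclideanSpace.proj (𝕜 := ℝ) i).comp_memLp' hm
  have h1 : ∫ y, ‖y‖ ^ 2 ∂γ = ∑ i, S i i := by
    simp_rw [EuclideanSpace.norm_sq_eq, Real.norm_eq_abs, sq_abs]
    rw [integral_finsetSum _ fun i _ => (hmi i).integrable_sq]
    refine Finset.sum_congr rfl fun i _ => ?_
    rw [← variance_eval_multivariateGaussian (μ := 0) hS i, variance_of_integral_eq_zero]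
    · fun_prop
    · have := (EuclideanSpace.proj (𝕜 := ℝ) i).integral_comp_comm (hm.integrable (by norm_num))
      change ∫ y : EuclideanSpace ℝ ι, y i ∂γ = (∫ y : EuclideanSpace ℝ ι, y ∂γ) i at this
      rw [this]
      simp [γ]
  have h2 := variance_nonneg (fun y : EuclideanSpace ℝ ι => ‖y‖) γ
  rw [variance_eq_sub hm.norm] at h2
  apply Real.le_sqrt_of_sq_le
  rw [← h1]
  simp only [Pi.pow_apply] at h2
  linarith

lemma mg_compare {ι : Type*} [Fintype ι] [DecidableEq ι] {S T : Matrix ι ι ℝ} (hS : S.PosSemidef)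
    (hT : T.PosSemidef) (f : EuclideanSpace ℝ ι → ℝ) (hf : Continuous f) (C K : ℝ) (hK : 0 ≤ K)
    (hC : ∀ x, |f x| ≤ C) (hfK : ∀ x y, |f x - f y| ≤ K * ‖x - y‖) :
    |∫ x, f x ∂(multivariateGaussian 0 (S + T)) - ∫ x, f x ∂(multivariateGaussian 0 S)| ≤
      K * Real.sqrt (∑ i, T i i) := by
  set γ := multivariateGaussian (0 : EuclideanSpace ℝ ι) S
  set δ := multivariateGaussian (0 : EuclideanSpace ℝ ι) T with hδ
  rw [mg_conv hS hT]
  have hm : MemLp (fun y : EuclideanSpace ℝ ι => y) 2 δ := IsGaussian.memLp_two_id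
  have hni : Integrable (fun y : EuclideanSpace ℝ ι => ‖y‖) δ := (hm.integrable (by norm_num)).norm
  have hbi : ∀ (ν : Measure (EuclideanSpace ℝ ι)) [IsProbabilityMeasure ν]
      (k : EuclideanSpace ℝ ι → ℝ), Continuous k → (∀ x, |k x| ≤ C) → Integrable k ν := by
    intro ν _ k hk hkC
    exact Integrable.of_bound hk.aestronglyMeasurable C (ae_of_all _ hkC)
  have hin : ∀ x, |∫ y, f (x + y) ∂δ - f x| ≤ K * Real.sqrt (∑ i, T i i) := by
    intro x
    have i1 : Integrable (fun y => f (x + y)) δ := hbi δ _ (by fun_prop) fun y => hC _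
    have : ∫ y, f (x + y) ∂δ - f x = ∫ y, (f (x + y) - f x) ∂δ := by
      rw [integral_sub i1 (integrable_const _)]; simp
    rw [this]
    calc _ ≤ ∫ y, |f (x + y) - f x| ∂δ := abs_integral_le_integral_abs
      _ ≤ ∫ y, K * ‖y‖ ∂δ := by
        refine integral_mono (i1.sub (integrable_const _)).abs (hni.const_mul K) fun y => ?_
        have := hfK (x + y) x
        simpa using this
      _ = K * ∫ y, ‖y‖ ∂δ := integral_const_mul _ _
      _ ≤ _ := mul_le_mul_of_nonneg_left (mg_norm hT) hK
  have hfc : Integrable f (γ ∗ δ) := hbi _ f hf hC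
  rw [integral_conv hfc]
  have i2 : Integrable (fun x => ∫ y, f (x + y) ∂δ) γ := by
    have : Integrable (fun p : EuclideanSpace ℝ ι × EuclideanSpace ℝ ι => f (p.1 + p.2)) (γ.prod δ) :=
      Integrable.of_bound (by fun_prop) C (ae_of_all _ fun p => hC _)
    exact this.integral_prod_left
  rw [← integral_sub i2 (hbi γ f hf hC)]
  have := norm_integral_le_of_norm_le_const (μ := γ)
    (f := fun x => ∫ y, f (x + y) ∂δ - f x) (ae_of_all _ hin)
  simpa using this

lemma cov_eq {Ω : Type*} [MeasurableSpace Ω] {P : Measure Ω}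
    {X : ℤ → ℤ → Ω → ℝ} (hX : StatGauss P X) {h : ℝ × ℝ → ℝ} (hs : HasSpecDensity P X h)
    (hi : IntegrableOn h specBox volume) {N : ℕ} (p q : Fin N × Fin N) :
    ∫ ω, X ((p.1 : ℕ) + 1) ((p.2 : ℕ) + 1) ω * X ((q.1 : ℕ) + 1) ((q.2 : ℕ) + 1) ω ∂P =
      cMat N h p q := by
  have h1 := hX.stat ((p.1 : ℕ) + 1) ((p.2 : ℕ) + 1) (((q.1 : ℕ) : ℤ) - ((p.1 : ℕ) : ℤ))
    (((q.2 : ℕ) : ℤ) - ((p.2 : ℕ) : ℤ))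
  have e1 : (((p.1 : ℕ) : ℤ) + 1) + (((q.1 : ℕ) : ℤ) - ((p.1 : ℕ) : ℤ)) = ((q.1 : ℕ) : ℤ) + 1 := by ring
  have e2 : (((p.2 : ℕ) : ℤ) + 1) + (((q.2 : ℕ) : ℤ) - ((p.2 : ℕ) : ℤ)) = ((q.2 : ℕ) : ℤ) + 1 := by ring
  rw [e1, e2] at h1
  rw [h1]
  have h2 := congrArg Complex.re (hs (((q.1 : ℕ) : ℤ) - ((p.1 : ℕ) : ℤ)) (((q.2 : ℕ) : ℤ) - ((p.2 : ℕ) : ℤ)))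
  rw [Complex.ofReal_re] at h2
  rw [← h2, cMat]
  have hint : Integrable (fun z : ℝ × ℝ => Complex.exp (Complex.I * (((((((q.1 : ℕ) : ℤ) - ((p.1 : ℕ) : ℤ)) : ℤ) : ℝ) * z.1 +
      (((((q.2 : ℕ) : ℤ) - ((p.2 : ℕ) : ℤ)) : ℤ) : ℝ) * z.2 : ℝ) : ℂ)) * ((h z : ℝ) : ℂ)) (volume.restrict specBox) := by
    refine Integrable.bdd_mul (c := 1) hi.ofReal (by fun_prop) ?_
    refine ae_of_all _ fun z => ?_
    rw [mul_comm, Complex.norm_exp_ofReal_mul_I]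
  have h3 := Complex.reCLM.integral_comp_comm hint
  simp only [Complex.reCLM_apply] at h3
  rw [← h3]
  congr 1
  ext z
  rw [Complex.re_mul_ofReal, mul_comm Complex.I, Complex.exp_ofReal_mul_I_re]
  push_cast
  rfl

lemma law_eq {Ω : Type*} [MeasurableSpace Ω] {P : Measure Ω} [IsProbabilityMeasure P]
    {X : ℤ → ℤ → Ω → ℝ} (hX : StatGauss P X) {h : ℝ × ℝ → ℝ} (hs : HasSpecDensity P X h)
    (hi : IntegrableOn h specBox volume) (h0 : ∀ z, 0 ≤ h z) (N : ℕ) :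
    Measurable (vecOf X N) ∧ P.map (vecOf X N) = multivariateGaussian 0 (cMat N h) := by
  have hmeas : Measurable (vecOf X N) := by
    have : Measurable fun ω => (fun p : Fin N × Fin N => X ((p.1 : ℕ) + 1) ((p.2 : ℕ) + 1) ω) :=
      measurable_pi_lambda _ fun p => hX.meas _ _
    exact (WithLp.measurable_toLp 2 _).comp this
  refine ⟨hmeas, ?_⟩
  have := Measure.isProbabilityMeasure_map (μ := P) hmeas.aemeasurable
  apply Measure.ext_of_charFun
  ext t
  let Z : Fin N × Fin N → Ω → ℝ := fun p ω => X ((p.1 : ℕ) + 1) ((p.2 : ℕ) + 1) ω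
  have hZm : ∀ p, Measurable (Z p) := fun p => hX.meas _ _
  have hZ2 : ∀ p, MemLp (Z p) 2 P := by
    intro p
    obtain ⟨v, hv⟩ := hX.gauss (Finsupp.single ((((p.1 : ℕ) + 1 : ℤ), ((p.2 : ℕ) + 1 : ℤ))) 1)
    rw [Finsupp.support_single (hb := one_ne_zero)] at hv
    simp only [Finset.sum_singleton, Finsupp.single_eq_same, one_mul] at hv
    have hg : MemLp id 2 (P.map (Z p)) := by
      change MemLp id 2 (P.map (fun ω => X ((p.1 : ℕ) + 1) ((p.2 : ℕ) + 1) ω))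
      rw [hv]; exact memLp_id_gaussianReal' 2 (by norm_num)
    exact (memLp_map_measure_iff (by fun_prop) (hZm p).aemeasurable).1 hg
  let Y : Ω → ℝ := fun ω => ∑ p, t p * Z p ω
  have hYm : Measurable Y := by
    refine Finset.measurable_sum _ fun p _ => (hZm p).const_mul _
  have hY2 : MemLp Y 2 P := memLp_finsetSum _ fun p _ => (hZ2 p).const_mul _
  have hYg : ∃ v : NNReal, P.map Y = gaussianReal 0 v := by
    let e : Fin N × Fin N ↪ ℤ × ℤ := ⟨fun p => ((p.1 : ℕ) + 1, (p.2 : ℕ) + 1), by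
      intro p q hpq
      simp only [Prod.mk.injEq, add_left_inj, Nat.cast_inj] at hpq
      exact Prod.ext (Fin.ext hpq.1) (Fin.ext hpq.2)⟩
    obtain ⟨v, hv⟩ := hX.gauss (Finsupp.embDomain e (Finsupp.equivFunOnFinite.symm t.ofLp))
    refine ⟨v, ?_⟩
    rw [← hv]
    congr 1
    ext ω
    change _ = Finsupp.sum _ (fun (q : ℤ × ℤ) (a : ℝ) => a * X q.1 q.2 ω)
    rw [Finsupp.sum_embDomain, Finsupp.sum_fintype _ _ (by simp)]
    rfl
  obtain ⟨v, hv⟩ := hYg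
  have hvar : (v : ℝ) = t.ofLp ⬝ᵥ (cMat N h).mulVec t.ofLp := by
    have e1 : ∫ ω, Y ω ∂P = 0 := by
      have := integral_map (μ := P) hYm.aemeasurable (f := fun x : ℝ => x) (by fun_prop)
      rw [← this, hv, integral_id_gaussianReal]
    have e2 : Var[Y; P] = v := by
      have := variance_map (μ := P) (X := (id : ℝ → ℝ)) (Y := Y) (by fun_prop) hYm.aemeasurable
      rw [hv, variance_id_gaussianReal] at this
      exact this.symm
    rw [← e2, variance_of_integral_eq_zero hYm.aemeasurable e1]
    have e3 : ∀ ω, Y ω ^ 2 = ∑ p, ∑ q, (t p * t q) * (Z p ω * Z q ω) := by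
      intro ω
      simp only [Y]
      rw [sq, Finset.sum_mul_sum]
      refine Finset.sum_congr rfl fun p _ => Finset.sum_congr rfl fun q _ => by ring
    simp_rw [e3]
    have hint : ∀ p q, Integrable (fun ω => (t p * t q) * (Z p ω * Z q ω)) P := fun p q =>
      ((hZ2 p).integrable_mul (hZ2 q)).const_mul _
    rw [integral_finsetSum _ fun p _ => integrable_finsetSum _ fun q _ => hint p q]
    simp only [dotProduct, Matrix.mulVec, Finset.mul_sum]
    refine Finset.sum_congr rfl fun p _ => ?_
    rw [integral_finsetSum _ fun q _ => hint p q]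
    refine Finset.sum_congr rfl fun q _ => ?_
    rw [integral_const_mul, cov_eq hX hs hi p q]
    ring
  rw [charFun_multivariateGaussian (cMat_psd N hi h0), ← hvar]
  have e4 : charFun (P.map (vecOf X N)) t = charFun (P.map Y) 1 := by
    rw [charFun_apply, charFun_apply, integral_map hmeas.aemeasurable (by fun_prop),
      integral_map hYm.aemeasurable (by fun_prop)]
    congr 1
    ext ω
    congr 3
    simp [PiLp.inner_apply, vecOf, Y, Z]
  rw [e4, hv, charFun_gaussianReal]
  simp

lemma mean_tendsto {Ω : Type*} [MeasurableSpace Ω] {P : Measure Ω} [IsProbabilityMeasure P]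
    {S : ℕ → Ω → ℝ} (hS : ∀ N, Measurable (S N)) {C c : ℝ} (hC : ∀ N ω, |S N ω| ≤ C)
    (hlim : ∀ ε > 0, Tendsto (fun N => P {ω | ε ≤ |S N ω - c|}) atTop (nhds 0)) :
    Tendsto (fun N => ∫ ω, S N ω ∂P) atTop (nhds c) := by
  have hint : ∀ N, Integrable (S N) P := fun N =>
    Integrable.of_bound (hS N).aestronglyMeasurable C (ae_of_all _ (hC N))
  have htm : TendstoInMeasure P S atTop (fun _ => c) := by
    rw [tendstoInMeasure_iff_dist]
    intro ε hε
    simpa [Real.dist_eq] using hlim ε hε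
  refine tendsto_of_subseq_tendsto fun ns hns => ?_
  have h2 : TendstoInMeasure P (fun n => S (ns n)) atTop (fun _ => c) := fun ε hε =>
    (htm ε hε).comp hns
  obtain ⟨ms, _, hms⟩ := h2.exists_seq_tendsto_ae
  refine ⟨ms, ?_⟩
  have h3 := tendsto_integral_of_dominated_convergence (μ := P) (fun _ => C)
    (fun n => (hS (ns (ms n))).aestronglyMeasurable) (integrable_const C)
    (fun n => ae_of_all _ (hC (ns (ms n)))) hms
  simpa using h3

lemma lsd_tendsto {h : ℝ × ℝ → ℝ} {μ : Measure ℝ} (hl : IsLSDofDensity h μ)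
    (hi : IntegrableOn h specBox volume) (h0 : ∀ z, 0 ≤ h z) (F : ℝ → ℝ) (C L : ℝ)
    (hC : ∀ x, |F x| ≤ C) (hL0 : 0 ≤ L) (hL : ∀ x y, |F x - F y| ≤ L * |x - y|)
    (hF : Continuous F) :
    Tendsto (fun N => ∫ x, esdEval (matOf x) F ∂(multivariateGaussian 0 (cMat N h))) atTop
      (nhds (∫ t, F t ∂μ)) := by
  obtain ⟨Ω, _, P, _, X, hX, hs, hE⟩ := hl
  have hlaw := law_eq hX hs hi h0
  have e : ∀ N, ∫ x, esdEval (matOf x) F ∂(multivariateGaussian 0 (cMat N h)) =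
      ∫ ω, esdEval (scaledW X N ω) F ∂P := by
    intro N
    rw [← (hlaw N).2, integral_map (hlaw N).1.aemeasurable
      (esd_cont F L hL0 hL).aestronglyMeasurable]
    rfl
  simp_rw [e]
  refine mean_tendsto (C := C) (fun N => ?_) (fun N ω => ?_) (hE F hF ⟨C, hC⟩)
  · exact (esd_cont F L hL0 hL).measurable.comp (hlaw N).1
  · exact esd_bdd F C hC (vecOf X N ω)

lemma compare_fin {h k : ℝ × ℝ → ℝ} (hi : IntegrableOn h specBox volume) (h0 : ∀ z, 0 ≤ h z)
    (ki : IntegrableOn k specBox volume) (k0 : ∀ z, 0 ≤ k z) (F : ℝ → ℝ) (C L : ℝ)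
    (hC : ∀ x, |F x| ≤ C) (hL0 : 0 ≤ L) (hL : ∀ x y, |F x - F y| ≤ L * |x - y|) (N : ℕ) :
    |∫ x, esdEval (matOf x) F ∂(multivariateGaussian 0 (cMat N (fun z => h z + k z))) -
      ∫ x, esdEval (matOf x) F ∂(multivariateGaussian 0 (cMat N h))| ≤
      2 * L * Real.sqrt (∫ z in specBox, k z) := by
  rw [cMat_add N hi ki]
  refine (mg_compare (cMat_psd N hi h0) (cMat_psd N ki k0) _ (esd_cont F L hL0 hL) C (2 * L / N)
    (by positivity) (esd_bdd F C hC) (esd_lip F L hL0 hL)).trans ?_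
  simp_rw [cMat_trace]
  simp only [Finset.sum_const, Finset.card_univ, Fintype.card_prod, Fintype.card_fin, nsmul_eq_mul]
  push_cast
  rw [Real.sqrt_mul (by positivity), Real.sqrt_mul_self (by positivity)]
  have : 0 ≤ Real.sqrt (∫ z in specBox, k z) := Real.sqrt_nonneg _
  rcases Nat.eq_zero_or_pos N with rfl | hN
  · simp; positivity
  · have hN' : (0 : ℝ) < N := by exact_mod_cast hN
    apply le_of_eq
    field_simp

lemma lsd_compare {h k : ℝ × ℝ → ℝ} {μ ν : Measure ℝ} (hl : IsLSDofDensity h μ)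
    (kl : IsLSDofDensity k ν) (hi : IntegrableOn h specBox volume) (h0 : ∀ z, 0 ≤ h z)
    (ki : IntegrableOn k specBox volume) (k0 : ∀ z, 0 ≤ k z) (F : ℝ → ℝ) (C L : ℝ)
    (hC : ∀ x, |F x| ≤ C) (hL0 : 0 ≤ L) (hL : ∀ x y, |F x - F y| ≤ L * |x - y|)
    (hF : Continuous F) :
    |∫ t, F t ∂μ - ∫ t, F t ∂ν| ≤ 4 * L * Real.sqrt (∫ z in specBox, |h z - k z|) := by
  have t1 := lsd_tendsto hl hi h0 F C L hC hL0 hL hF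
  have t2 := lsd_tendsto kl ki k0 F C L hC hL0 hL hF
  refine le_of_tendsto (t1.sub t2).abs (Eventually.of_forall fun N => ?_)
  have mi : IntegrableOn (fun z => min (h z) (k z)) specBox volume := hi.inf ki
  have m0 : ∀ z, 0 ≤ min (h z) (k z) := fun z => le_min (h0 z) (k0 z)
  have dI : IntegrableOn (fun z => |h z - k z|) specBox volume := (hi.sub ki).abs
  have a1 := compare_fin mi m0 (k := fun z => h z - min (h z) (k z)) (hi.sub mi)
    (fun z => sub_nonneg.2 (min_le_left _ _)) F C L hC hL0 hL N
  have a2 := compare_fin mi m0 (k := fun z => k z - min (h z) (k z)) (ki.sub mi)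
    (fun z => sub_nonneg.2 (min_le_right _ _)) F C L hC hL0 hL N
  simp only [add_sub_cancel] at a1 a2
  have b1 : ∫ z in specBox, (h z - min (h z) (k z)) ≤ ∫ z in specBox, |h z - k z| := by
    refine integral_mono (hi.sub mi) dI fun z => ?_
    simp only
    rcases le_total (h z) (k z) with hz | hz
    · rw [min_eq_left hz]; simp
    · rw [min_eq_right hz]; exact le_abs_self _
  have b2 : ∫ z in specBox, (k z - min (h z) (k z)) ≤ ∫ z in specBox, |h z - k z| := by
    refine integral_mono (ki.sub mi) dI fun z => ?_
    simp only
    rcases le_total (h z) (k z) with hz | hz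
    · rw [min_eq_left hz, abs_sub_comm]; exact le_abs_self _
    · rw [min_eq_right hz]; simp
  have c1 := mul_le_mul_of_nonneg_left (Real.sqrt_le_sqrt b1) (by positivity : 0 ≤ 2 * L)
  have c2 := mul_le_mul_of_nonneg_left (Real.sqrt_le_sqrt b2) (by positivity : 0 ≤ 2 * L)
  rw [abs_le] at a1 a2 ⊢
  constructor <;> linarith [a1.1, a1.2, a2.1, a2.2]

/-- **Lemma 3.5.** If nonnegative, integrable, even densities `g_n` converge
to `g_∞` in `L¹([-π,π]²)`, then `μ_{g_n}` converges weakly to `μ_{g_∞}`. -/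
theorem statement11 (g : ℕ → ℝ × ℝ → ℝ) (ginf : ℝ × ℝ → ℝ)
    (hg_nonneg : ∀ n q, 0 ≤ g n q) (hginf_nonneg : ∀ q, 0 ≤ ginf q)
    (hg_int : ∀ n, IntegrableOn (g n) specBox volume)
    (hginf_int : IntegrableOn ginf specBox volume)
    (hg_even : ∀ n, ∀ᵐ q ∂(volume.restrict specBox), g n (-q.1, -q.2) = g n q)
    (hginf_even : ∀ᵐ q ∂(volume.restrict specBox), ginf (-q.1, -q.2) = ginf q)
    (hL1 : Tendsto (fun n => ∫ q in specBox, |g n q - ginf q|) atTop (nhds 0))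
    (μ : ℕ → Measure ℝ) (μinf : Measure ℝ)
    (hμ : ∀ n, IsProbabilityMeasure (μ n)) (hμinf : IsProbabilityMeasure μinf)
    (hlsd : ∀ n, IsLSDofDensity (g n) (μ n))
    (hlsdinf : IsLSDofDensity ginf μinf) :
    ∀ F : ℝ → ℝ, Continuous F → (∃ C, ∀ t, |F t| ≤ C) →
      Tendsto (fun n => ∫ t, F t ∂(μ n)) atTop (nhds (∫ t, F t ∂μinf)) := by
  let M : ℕ → ProbabilityMeasure ℝ := fun n => ⟨μ n, hμ n⟩
  let Mi : ProbabilityMeasure ℝ := ⟨μinf, hμinf⟩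
  have key : Tendsto M atTop (nhds Mi) := by
    rw [tendsto_iff_forall_lipschitz_integral_tendsto]
    rintro F ⟨C, hC⟩ ⟨L, hL⟩
    have hC' : ∀ x, |F x| ≤ |F 0| + C := by
      intro x
      have h1 := hC x 0
      rw [Real.dist_eq] at h1
      have h2 := abs_sub_abs_le_abs_sub (F x) (F 0)
      linarith
    have hL' : ∀ x y, |F x - F y| ≤ (L : ℝ) * |x - y| := fun x y => by
      simpa [Real.dist_eq] using hL.dist_le_mul x y
    have hlim : Tendsto (fun n => 4 * (L : ℝ) * Real.sqrt (∫ z in specBox, |g n z - ginf z|))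
        atTop (nhds 0) := by
      have := (hL1.sqrt).const_mul (4 * (L : ℝ))
      simpa using this
    rw [tendsto_iff_dist_tendsto_zero]
    refine squeeze_zero (fun n => dist_nonneg) (fun n => ?_) hlim
    rw [Real.dist_eq]
    exact lsd_compare (hlsd n) hlsdinf (hg_int n) (hg_nonneg n) hginf_int hginf_nonneg F
      (|F 0| + C) L hC' L.2 hL' hL.continuous
  intro F hF hFb
  obtain ⟨C, hC⟩ := hFb
  rw [ProbabilityMeasure.tendsto_iff_forall_integral_tendsto] at key
  exact key (BoundedContinuousFunction.ofNormedAddCommGroup F hF C hC)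

end
end

section
/- If g(x,y) := (1/2)[f(x,y) + f(y,x)] for x,y ∈ [−π,π], then μ_f = μ_g; i.e., the limiting spectral distribution is unchanged when the spectral density is replaced by its symmetrization in the two coordinates. -/
open MeasureTheory ProbabilityTheory Filter Real

noncomputable section

section MatrixPart
open scoped Matrix.Norms.L2Operator Matrix

/-- complex lift -/
def cl {N : ℕ} (A : Matrix (Fin N) (Fin N) ℝ) : Matrix (Fin N) (Fin N) ℂ :=
  A.map (fun x => (x : ℂ))

/-- resolvent at `i` -/
def rs {N : ℕ} (A : Matrix (Fin N) (Fin N) ℝ) : Matrix (Fin N) (Fin N) ℂ :=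
  (cl A - Complex.I • (1 : Matrix (Fin N) (Fin N) ℂ))⁻¹

/-- Cayley transform -/
def cay {N : ℕ} (A : Matrix (Fin N) (Fin N) ℝ) : Matrix (Fin N) (Fin N) ℂ :=
  1 + (2 * Complex.I) • rs A

/-- scalar Cayley transform -/
def uu (x : ℝ) : ℂ := 1 + (2 * Complex.I) * ((x : ℂ) - Complex.I)⁻¹

lemma sub_I_ne (x : ℝ) : (x : ℂ) - Complex.I ≠ 0 := by
  intro h
  have := congrArg Complex.im h
  simp at this

lemma uu_mul_star (x : ℝ) : uu x * star (uu x) = 1 := by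
  have h1 := sub_I_ne x
  have h2 : (x : ℂ) + Complex.I ≠ 0 := by
    intro h
    have := congrArg Complex.im h
    simp at this
  have hI : Complex.I ^ 2 = -1 := Complex.I_sq
  simp only [uu, Complex.star_def, map_add, map_mul, map_one, map_inv₀, map_sub, Complex.conj_ofReal,
    Complex.conj_I, sub_neg_eq_add, Complex.conj_ofNat]
  field_simp
  ring_nf

lemma diag_data {N : ℕ} (A : Matrix (Fin N) (Fin N) ℝ) (hA : A.IsHermitian) :
    ∃ V : Matrix (Fin N) (Fin N) ℂ, V * Vᴴ = 1 ∧ Vᴴ * V = 1 ∧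
      cl A = V * Matrix.diagonal (fun i => (hA.eigenvalues i : ℂ)) * Vᴴ := by
  have h := hA.spectral_theorem
  set V0 : Matrix (Fin N) (Fin N) ℝ := (hA.eigenvectorUnitary).1 with hV0
  have h1 : V0 * V0ᴴ = 1 := by
    have := Unitary.mul_star_self_of_mem hA.eigenvectorUnitary.2
    exact this
  have h2 : V0ᴴ * V0 = 1 := by
    have := Unitary.star_mul_self_of_mem hA.eigenvectorUnitary.2
    exact this
  have h3 : A = V0 * Matrix.diagonal hA.eigenvalues * V0ᴴ := by
    conv_lhs => rw [h]
    rw [Unitary.conjStarAlgAut_apply]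
    rfl
  have hc : (V0.map (Complex.ofRealHom))ᴴ = (V0ᴴ).map Complex.ofRealHom := by
    ext i j; simp
  refine ⟨V0.map Complex.ofRealHom, ?_, ?_, ?_⟩
  · rw [hc, ← Matrix.map_mul, h1]; simp
  · rw [hc, ← Matrix.map_mul, h2]; simp
  · rw [hc]
    have : cl A = A.map Complex.ofRealHom := rfl
    rw [this]
    conv_lhs => rw [h3]
    rw [Matrix.map_mul, Matrix.map_mul, Matrix.diagonal_map (by simp)]
    rfl

lemma rs_data {N : ℕ} (A : Matrix (Fin N) (Fin N) ℝ) (hA : A.IsHermitian) :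
    ∃ V : Matrix (Fin N) (Fin N) ℂ, V * Vᴴ = 1 ∧ Vᴴ * V = 1 ∧
      rs A * (cl A - Complex.I • 1) = 1 ∧ (cl A - Complex.I • 1) * rs A = 1 ∧ 
      cay A = V * Matrix.diagonal (fun i => uu (hA.eigenvalues i)) * Vᴴ := by
  obtain ⟨V, h1, h2, h3⟩ := diag_data A hA
  have e1 : cl A - Complex.I • (1 : Matrix (Fin N) (Fin N) ℂ)
      = V * Matrix.diagonal (fun i => (hA.eigenvalues i : ℂ) - Complex.I) * Vᴴ := by
    have : Matrix.diagonal (fun i => (hA.eigenvalues i : ℂ) - Complex.I)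
      = Matrix.diagonal (fun i => (hA.eigenvalues i : ℂ)) - Complex.I • 1 := by
      rw [← Matrix.diagonal_one, ← Matrix.diagonal_smul, Matrix.diagonal_sub]
      simp
    rw [this, mul_sub, sub_mul, ← h3]
    simp [h1]
  have e2 : (V * Matrix.diagonal (fun i => ((hA.eigenvalues i : ℂ) - Complex.I)⁻¹) * Vᴴ) *
      (cl A - Complex.I • (1 : Matrix (Fin N) (Fin N) ℂ)) = 1 := by
    rw [e1]
    calc _ = V * (Matrix.diagonal (fun i => ((hA.eigenvalues i : ℂ) - Complex.I)⁻¹) * (Vᴴ * V) *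
          Matrix.diagonal (fun i => ((hA.eigenvalues i : ℂ) - Complex.I))) * Vᴴ := by
            simp only [mul_assoc]
      _ = 1 := by
        rw [h2, mul_one, Matrix.diagonal_mul_diagonal]
        simp only [inv_mul_cancel₀ (sub_I_ne _), Matrix.diagonal_one, mul_one, h1]
  have e3 : rs A = V * Matrix.diagonal (fun i => ((hA.eigenvalues i : ℂ) - Complex.I)⁻¹) * Vᴴ :=
    Matrix.inv_eq_left_inv e2
  have e4 : rs A * (cl A - Complex.I • 1) = 1 := by rw [e3, e2]
  refine ⟨V, h1, h2, e4, mul_eq_one_comm.mp e4, ?_⟩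
  have : Matrix.diagonal (fun i => uu (hA.eigenvalues i))
      = 1 + (2 * Complex.I) • Matrix.diagonal (fun i => ((hA.eigenvalues i : ℂ) - Complex.I)⁻¹) := by
    rw [← Matrix.diagonal_one, ← Matrix.diagonal_smul, Matrix.diagonal_add]
    rfl
  rw [cay, this, mul_add, add_mul, e3]
  simp [h1]

lemma cay_pow_trace {N : ℕ} (A : Matrix (Fin N) (Fin N) ℝ) (hA : A.IsHermitian) (k : ℕ) :
    (cay A ^ k).trace = ∑ j, uu (hA.eigenvalues j) ^ k := by
  obtain ⟨V, h1, h2, -, -, h3⟩ := rs_data A hA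
  have : cay A ^ k = V * Matrix.diagonal (fun i => uu (hA.eigenvalues i) ^ k) * Vᴴ := by
    induction k with
    | zero => simp [h1]
    | succ k ih =>
      rw [pow_succ, ih, h3]
      calc _ = V * (Matrix.diagonal (fun i => uu (hA.eigenvalues i) ^ k) * (Vᴴ * V) *
            Matrix.diagonal (fun i => uu (hA.eigenvalues i))) * Vᴴ := by
              simp only [mul_assoc]
        _ = _ := by
          rw [h2, mul_one, Matrix.diagonal_mul_diagonal]
          simp only [pow_succ]
  rw [this, Matrix.trace_mul_comm, ← mul_assoc, h2, one_mul, Matrix.trace_diagonal]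

lemma norm_one_le {N : ℕ} : ‖(1 : Matrix (Fin N) (Fin N) ℂ)‖ ≤ 1 := by
  rcases isEmpty_or_nonempty (Fin N) with h | h
  · have : (1 : Matrix (Fin N) (Fin N) ℂ) = 0 := Subsingleton.elim _ _
    rw [this]; simp
  · have : Nontrivial (Matrix (Fin N) (Fin N) ℂ) := inferInstance
    exact (CStarRing.norm_one).le

lemma cay_norm {N : ℕ} (A : Matrix (Fin N) (Fin N) ℝ) (hA : A.IsHermitian) :
    ‖cay A‖ ≤ 1 := by
  obtain ⟨V, h1, h2, -, -, h3⟩ := rs_data A hA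
  have : (cay A)ᴴ * cay A = 1 := by
    rw [h3, Matrix.conjTranspose_mul, Matrix.conjTranspose_mul, Matrix.conjTranspose_conjTranspose,
      Matrix.diagonal_conjTranspose]
    calc _ = V * (Matrix.diagonal (star (fun i => uu (hA.eigenvalues i))) * (Vᴴ * V) *
            Matrix.diagonal (fun i => uu (hA.eigenvalues i))) * Vᴴ := by
              simp only [mul_assoc]
      _ = _ := by
        rw [h2, mul_one, Matrix.diagonal_mul_diagonal]
        have : (fun i => (star (fun i => uu (hA.eigenvalues i))) i * uu (hA.eigenvalues i)) = fun _ => 1 := by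
          funext i
          rw [mul_comm]
          exact uu_mul_star _
        rw [this]
        simp [h1]
  have h4 := Matrix.l2_opNorm_conjTranspose_mul_self (cay A)
  rw [this] at h4
  have := norm_one_le (N := N)
  nlinarith [norm_nonneg (cay A)]

lemma rs_norm {N : ℕ} (A : Matrix (Fin N) (Fin N) ℝ) (hA : A.IsHermitian) :
    ‖rs A‖ ≤ 1 := by
  have h : (2 * Complex.I) • rs A = cay A - 1 := by simp [cay]
  have h1 : ‖(2 * Complex.I) • rs A‖ = 2 * ‖rs A‖ := by
    rw [norm_smul]; simp
  have h2 : ‖cay A - 1‖ ≤ 2 := by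
    have := norm_sub_le (cay A) 1
    have := norm_one_le (N := N)
    have := cay_norm A hA
    linarith
  rw [h] at h1
  linarith

lemma cay_sub {N : ℕ} (A B : Matrix (Fin N) (Fin N) ℝ) (hA : A.IsHermitian) (hB : B.IsHermitian) :
    cay A - cay B = (2 * Complex.I) • (rs A * cl (B - A) * rs B) := by
  obtain ⟨-, -, -, a1, -, -⟩ := rs_data A hA
  obtain ⟨-, -, -, -, b1, -⟩ := rs_data B hB
  have : cl (B - A) = (cl B - Complex.I • 1) - (cl A - Complex.I • 1) := by
    ext i j; simp [cl]
  rw [this, mul_sub, sub_mul, a1, mul_assoc, b1, cay, cay]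
  simp [smul_sub]

lemma pow_bound {N : ℕ} (U W : Matrix (Fin N) (Fin N) ℂ) (hU : ‖U‖ ≤ 1) (hW : ‖W‖ ≤ 1) (C : ℝ)
    (hC : ∀ V : Matrix (Fin N) (Fin N) ℂ, ‖V‖ ≤ 1 → ‖(V * (U - W)).trace‖ ≤ C) (k : ℕ) :
    ∀ V : Matrix (Fin N) (Fin N) ℂ, ‖V‖ ≤ 1 → ‖(V * (U ^ k - W ^ k)).trace‖ ≤ k * C := by
  induction k with
  | zero => intro V _; simp
  | succ k ih =>
    intro V hV
    have e : V * (U ^ (k+1) - W ^ (k+1)) = (V * U ^ k) * (U - W) + (V * (U ^ k - W ^ k)) * W := by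
      simp only [pow_succ]; noncomm_ring
    have hk : ‖U ^ k‖ ≤ 1 := by
      clear ih e
      induction k with
      | zero => simpa using norm_one_le
      | succ k ih =>
        rw [pow_succ]
        exact (norm_mul_le _ _).trans (mul_le_one₀ ih (norm_nonneg _) hU)
    rw [e, Matrix.trace_add, Matrix.trace_mul_comm (V * (U ^ k - W ^ k)) W, ← mul_assoc W]
    refine (norm_add_le _ _).trans ?_
    have h1 := hC (V * U ^ k) ((norm_mul_le _ _).trans (mul_le_one₀ hV (norm_nonneg _) hk))
    have h2 := ih (W * V) ((norm_mul_le _ _).trans (mul_le_one₀ hW (norm_nonneg _) hV))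
    push_cast
    linarith

lemma trace_vecMulVec_le {N : ℕ} (x y : Fin N → ℂ) :
    ‖(Matrix.vecMulVec x y).trace‖ ≤ ‖Matrix.vecMulVec x y‖ := by
  set M := Matrix.vecMulVec x y with hM
  have h : M * M = M.trace • M := by
    rw [hM, Matrix.vecMulVec_mul_vecMulVec, Matrix.trace_vecMulVec, dotProduct_comm]
    ext i j
    simp [Matrix.vecMulVec_apply]
    try ring
  by_cases h0 : M = 0
  · simp [h0]
  · have h1 : ‖M.trace‖ * ‖M‖ ≤ ‖M‖ * ‖M‖ := by
      rw [← norm_smul, ← h]; exact norm_mul_le _ _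
    exact le_of_mul_le_mul_right h1 (norm_pos_iff.mpr h0)

lemma rank_one_bound {N : ℕ} (A : Matrix (Fin N) (Fin N) ℝ) (hA : A.IsHermitian) (t : ℝ)
    (v : Fin N → ℝ) (k : ℕ) :
    ‖(cay A ^ k).trace - (cay (A + t • Matrix.vecMulVec v v) ^ k).trace‖ ≤ k * 2 := by
  set B := A + t • Matrix.vecMulVec v v with hBd
  have hB : B.IsHermitian := by
    refine hA.add ?_
    ext i j; simp [Matrix.vecMulVec_apply]; ring_nf; simp
  have hc : cl (B - A) = Matrix.vecMulVec (fun i => (t * v i : ℂ)) (fun i => (v i : ℂ)) := by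
    ext i j; simp [cl, hBd, Matrix.vecMulVec_apply]; ring
  rw [← Matrix.trace_sub, ← one_mul (cay A ^ k - cay B ^ k)]
  refine pow_bound _ _ (cay_norm A hA) (cay_norm B hB) 2 ?_ k 1 norm_one_le
  intro V hV
  have h1 : ∃ x y, V * (cay A - cay B) = Matrix.vecMulVec x y := by
    rw [cay_sub A B hA hB, hc]
    refine ⟨V *ᵥ ((2 * Complex.I) • (rs A *ᵥ (fun i => (t * v i : ℂ)))), (fun i => (v i : ℂ)) ᵥ* rs B, ?_⟩
    rw [← Matrix.mul_vecMulVec, Matrix.smul_vecMulVec, ← Matrix.vecMulVec_mul, ← Matrix.mul_vecMulVec]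
  obtain ⟨x, y, hxy⟩ := h1
  have h2 := trace_vecMulVec_le x y
  rw [← hxy] at h2
  refine h2.trans ((norm_mul_le _ _).trans ?_)
  have h3 : ‖cay A - cay B‖ ≤ 2 := by
    have := norm_sub_le (cay A) (cay B)
    have := cay_norm A hA
    have := cay_norm B hB
    linarith
  nlinarith [norm_nonneg V, norm_nonneg (cay A - cay B)]

lemma low_rank_bound {N : ℕ} {ι : Type*} (s : Finset ι) (t : ι → ℝ) (v : ι → Fin N → ℝ)
    (A : Matrix (Fin N) (Fin N) ℝ) (hA : A.IsHermitian) (k : ℕ) :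
    (A + ∑ m ∈ s, t m • Matrix.vecMulVec (v m) (v m)).IsHermitian ∧
    ‖(cay A ^ k).trace - (cay (A + ∑ m ∈ s, t m • Matrix.vecMulVec (v m) (v m)) ^ k).trace‖
      ≤ s.card * (k * 2) := by
  classical
  induction s using Finset.induction_on with
  | empty => simpa using hA
  | insert a s ha ih =>
    rw [Finset.sum_insert ha, Finset.card_insert_of_notMem ha, add_comm (t a • _), ← add_assoc]
    obtain ⟨h1, h2⟩ := ih
    refine ⟨h1.add ?_, ?_⟩
    · ext i j; simp [Matrix.vecMulVec_apply]; ring_nf; simp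
    · have h3 := rank_one_bound _ h1 (t a) (v a) k
      refine (norm_sub_le_norm_sub_add_norm_sub _ _ _).trans ((add_le_add h2 h3).trans ?_)
      push_cast
      linarith

lemma entry_le {N : ℕ} (M : Matrix (Fin N) (Fin N) ℂ) (i : Fin N) :
    ∑ j, ‖M j i‖ ^ 2 ≤ ‖M‖ ^ 2 := by
  have h := Matrix.l2_opNorm_mulVec M (EuclideanSpace.single i 1)
  rw [PiLp.norm_single, norm_one, mul_one] at h
  have h2 := pow_le_pow_left₀ (norm_nonneg _) h 2
  rw [EuclideanSpace.norm_sq_eq] at h2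
  simpa using h2

lemma frob_bound {N : ℕ} (E M : Matrix (Fin N) (Fin N) ℂ) (hM : ‖M‖ ≤ 1) (s : ℝ) (hs : 0 < s) :
    ‖(E * M).trace‖ ≤ (2 * s)⁻¹ * ∑ i, ∑ j, ‖E i j‖ ^ 2 + s / 2 * N := by
  have h1 : ‖(E * M).trace‖ ≤ ∑ i, ∑ j, ‖E i j‖ * ‖M j i‖ := by
    simp only [Matrix.trace, Matrix.diag, Matrix.mul_apply]
    refine (norm_sum_le _ _).trans (Finset.sum_le_sum fun i _ => (norm_sum_le _ _).trans ?_)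
    simp
  have h2 : ∑ i, ∑ j, ‖E i j‖ * ‖M j i‖ ≤ ∑ i, ∑ j, ((2 * s)⁻¹ * ‖E i j‖ ^ 2 + s / 2 * ‖M j i‖ ^ 2) := by
    refine Finset.sum_le_sum fun i _ => Finset.sum_le_sum fun j _ => ?_
    have : (2 * s)⁻¹ * ‖E i j‖ ^ 2 + s / 2 * ‖M j i‖ ^ 2 - ‖E i j‖ * ‖M j i‖
      = (2 * s)⁻¹ * (‖E i j‖ - s * ‖M j i‖) ^ 2 := by
      field_simp; ring
    have : 0 ≤ (2 * s)⁻¹ * (‖E i j‖ - s * ‖M j i‖) ^ 2 := by positivity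
    linarith
  have h3 : ∑ i, ∑ j, ‖M j i‖ ^ 2 ≤ N := by
    calc _ ≤ ∑ i : Fin N, (1 : ℝ) := Finset.sum_le_sum fun i _ =>
          (entry_le M i).trans (pow_le_one₀ (norm_nonneg _) hM)
      _ = N := by simp
  simp only [Finset.sum_add_distrib, ← Finset.mul_sum] at h2
  have : s / 2 * ∑ i, ∑ j, ‖M j i‖ ^ 2 ≤ s / 2 * N := by gcongr
  linarith

lemma frob_pert {N : ℕ} (A E : Matrix (Fin N) (Fin N) ℝ) (hA : A.IsHermitian)
    (hE : E.IsHermitian) (k : ℕ) (s : ℝ) (hs : 0 < s) :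
    ‖(cay A ^ k).trace - (cay (A + E) ^ k).trace‖
      ≤ k * (2 * ((2 * s)⁻¹ * ∑ i, ∑ j, (E i j) ^ 2 + s / 2 * N)) := by
  have hB := hA.add hE
  rw [← Matrix.trace_sub, ← one_mul (cay A ^ k - cay (A + E) ^ k)]
  refine pow_bound _ _ (cay_norm A hA) (cay_norm _ hB) _ ?_ k 1 norm_one_le
  intro V hV
  rw [cay_sub A _ hA hB, add_sub_cancel_left, Matrix.mul_smul, Matrix.trace_smul, norm_smul]
  have e : (V * (rs A * cl E * rs (A + E))).trace = (cl E * (rs (A + E) * V * rs A)).trace := by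
    rw [← mul_assoc, ← mul_assoc, Matrix.trace_mul_comm, ← mul_assoc, ← mul_assoc, Matrix.trace_mul_comm]
  have hn : ‖rs (A + E) * V * rs A‖ ≤ 1 := by
    refine (norm_mul_le _ _).trans (mul_le_one₀ ((norm_mul_le _ _).trans
      (mul_le_one₀ (rs_norm _ hB) (norm_nonneg _) hV)) (norm_nonneg _) (rs_norm A hA))
  have := frob_bound (cl E) _ hn s hs
  rw [e]
  have h2 : ‖(2 * Complex.I)‖ = 2 := by simp
  rw [h2]
  have h3 : ∀ i j, ‖cl E i j‖ ^ 2 = E i j ^ 2 := by intro i j; simp [cl]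
  simp only [h3] at this
  linarith

end MatrixPart
section ProbPart
open scoped BoundedContinuousFunction

lemma uu_cont : Continuous uu := by
  unfold uu
  exact continuous_const.add (continuous_const.mul
    ((Complex.continuous_ofReal.sub continuous_const).inv₀ sub_I_ne))

lemma uu_norm (x : ℝ) : ‖uu x‖ = 1 := by
  have h := congrArg norm (uu_mul_star x)
  rw [norm_mul, norm_star, norm_one] at h
  nlinarith [norm_nonneg (uu x)]

lemma uu_pow_norm (x : ℝ) (k : ℕ) : ‖uu x ^ k‖ = 1 := by
  rw [norm_pow, uu_norm, one_pow]

lemma uu_inj : Function.Injective uu := by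
  intro x y h
  unfold uu at h
  have h1 : ((x : ℂ) - Complex.I)⁻¹ = ((y : ℂ) - Complex.I)⁻¹ := by
    have : (2 * Complex.I) ≠ 0 := by simp
    exact mul_left_cancel₀ this (add_left_cancel h)
  have h2 := inv_injective h1
  have h3 : (x : ℂ) = y := by simpa using h2
  exact_mod_cast h3

/-- bounded continuous version -/
def uB : ℝ →ᵇ ℂ := BoundedContinuousFunction.ofNormedAddCommGroup uu uu_cont 1
  (fun x => (uu_norm x).le)

lemma uB_star : uB * star uB = 1 := by
  ext x
  exact uu_mul_star x

lemma measure_ext_uu (μ₁ μ₂ : Measure ℝ) [IsProbabilityMeasure μ₁] [IsProbabilityMeasure μ₂]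
    (h : ∀ k : ℕ, ∫ x, uu x ^ k ∂μ₁ = ∫ x, uu x ^ k ∂μ₂) : μ₁ = μ₂ := by
  refine ext_of_forall_mem_subalgebra_integral_eq_of_pseudoEMetric_complete_countable
    (𝕜 := ℂ) (A := StarAlgebra.adjoin ℂ {uB}) ?_ ?_
  · intro x y hxy
    refine ⟨uu, ⟨BoundedContinuousFunction.toContinuousMapStarₐ ℂ uB,
      ⟨uB, StarAlgebra.self_mem_adjoin_singleton ℂ uB, rfl⟩, rfl⟩, fun h => hxy (uu_inj h)⟩
  · intro g hg
    have hg' : g ∈ Algebra.adjoin ℂ ({uB} ∪ star {uB}) := by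
      rw [← StarAlgebra.adjoin_toSubalgebra]; exact hg
    rw [← Subalgebra.mem_toSubmodule, Algebra.adjoin_eq_span] at hg'
    have key : ∀ m ∈ Submonoid.closure ({uB} ∪ star {uB} : Set (ℝ →ᵇ ℂ)),
        ∃ k : ℕ, m = uB ^ k ∨ m = star uB ^ k := by
      intro m hm
      induction hm using Submonoid.closure_induction_right with
      | one => exact ⟨0, by simp⟩
      | mul_right m hm y hy ih =>
        obtain ⟨k, ih⟩ := ih
        have hy' : y = uB ∨ y = star uB := by
          rcases hy with hy | hy
          · exact Or.inl hy
          · right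
            have : star y = uB := hy
            rw [← this, star_star]
        have c1 : star uB * uB = 1 := by rw [mul_comm]; exact uB_star
        rcases ih with rfl | rfl <;> rcases hy' with rfl | rfl
        · exact ⟨k + 1, Or.inl (pow_succ _ _).symm⟩
        · cases k with
          | zero => exact ⟨1, by simp⟩
          | succ k => exact ⟨k, Or.inl (by rw [pow_succ, mul_assoc, uB_star, mul_one])⟩
        · cases k with
          | zero => exact ⟨1, by simp⟩
          | succ k => exact ⟨k, Or.inr (by rw [pow_succ, mul_assoc, c1, mul_one])⟩
        · exact ⟨k + 1, Or.inr (pow_succ _ _).symm⟩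
    induction hg' using Submodule.span_induction with
    | mem m hm =>
      obtain ⟨k, rfl | rfl⟩ := key m hm
      · exact h k
      · have := congrArg (starRingEnd ℂ) (h k)
        rw [← integral_conj, ← integral_conj] at this
        rw [← star_pow]
        exact this
    | zero => simp
    | add a b ha hb iha ihb =>
      have ha' : a ∈ StarAlgebra.adjoin ℂ ({uB} : Set (ℝ →ᵇ ℂ)) := by
        change a ∈ (StarAlgebra.adjoin ℂ ({uB} : Set (ℝ →ᵇ ℂ))).toSubalgebra
        rw [StarAlgebra.adjoin_toSubalgebra, ← Subalgebra.mem_toSubmodule, Algebra.adjoin_eq_span]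
        exact ha
      have hb' : b ∈ StarAlgebra.adjoin ℂ ({uB} : Set (ℝ →ᵇ ℂ)) := by
        change b ∈ (StarAlgebra.adjoin ℂ ({uB} : Set (ℝ →ᵇ ℂ))).toSubalgebra
        rw [StarAlgebra.adjoin_toSubalgebra, ← Subalgebra.mem_toSubmodule, Algebra.adjoin_eq_span]
        exact hb
      have e : ∀ μ : Measure ℝ, IsProbabilityMeasure μ → ∫ x, (a + b) x ∂μ = ∫ x, a x ∂μ + ∫ x, b x ∂μ := by
        intro μ _
        exact integral_add (a.integrable μ) (b.integrable μ)
      rw [e _ inferInstance, e _ inferInstance, iha ha', ihb hb']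
    | smul c a ha iha =>
      have ha' : a ∈ StarAlgebra.adjoin ℂ ({uB} : Set (ℝ →ᵇ ℂ)) := by
        change a ∈ (StarAlgebra.adjoin ℂ ({uB} : Set (ℝ →ᵇ ℂ))).toSubalgebra
        rw [StarAlgebra.adjoin_toSubalgebra, ← Subalgebra.mem_toSubmodule, Algebra.adjoin_eq_span]
        exact ha
      have e : ∀ μ : Measure ℝ, ∫ x, (c • a) x ∂μ = c • ∫ x, a x ∂μ := by
        intro μ
        exact integral_smul c _
      rw [e, e, iha ha']

lemma exp_of_prob {Ω : Type*} [MeasurableSpace Ω] (P : Measure Ω) [IsProbabilityMeasure P]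
    (F : ℕ → Ω → ℝ) (c : ℝ) (hF : ∀ n, Measurable (F n)) (hb : ∀ n ω, |F n ω| ≤ 1) (hc : |c| ≤ 1)
    (h : ∀ ε > 0, Tendsto (fun n => P {ω | ε ≤ |F n ω - c|}) atTop (nhds 0)) :
    Tendsto (fun n => ∫ ω, F n ω ∂P) atTop (nhds c) := by
  rw [Metric.tendsto_atTop]
  intro ε hε
  have h1 := h (ε / 4) (by positivity)
  have h2 : Tendsto (fun n => P.real {ω | ε / 4 ≤ |F n ω - c|}) atTop (nhds 0) := by
    have := (ENNReal.tendsto_toReal (a := 0) (by simp)).comp h1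
    simpa [Function.comp_def, Measure.real] using this
  obtain ⟨n0, hn0⟩ := (Metric.tendsto_atTop.mp h2) (ε / 4) (by positivity)
  refine ⟨n0, fun n hn => ?_⟩
  have h3 := hn0 n hn
  rw [Real.dist_eq, sub_zero, abs_of_nonneg measureReal_nonneg] at h3
  set S := {ω | ε / 4 ≤ |F n ω - c|} with hS
  have hSm : MeasurableSet S :=
    measurableSet_le measurable_const ((hF n).sub_const c).abs
  have hint : Integrable (F n) P :=
    Integrable.of_bound (hF n).aestronglyMeasurable 1 (Eventually.of_forall (hb n))
  have e : ∫ ω, F n ω ∂P - c = ∫ ω, (F n ω - c) ∂P := by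
    rw [integral_sub hint (integrable_const _)]; simp
  rw [Real.dist_eq, e]
  have hle : ∀ ω, |F n ω - c| ≤ ε / 4 + S.indicator (fun _ => (2 : ℝ)) ω := by
    intro ω
    by_cases hω : ω ∈ S
    · rw [Set.indicator_of_mem hω]
      have := abs_sub (F n ω) c
      have := hb n ω
      linarith
    · rw [Set.indicator_of_notMem hω]
      have : |F n ω - c| < ε / 4 := not_le.mp hω
      linarith
  calc |∫ ω, (F n ω - c) ∂P| ≤ ∫ ω, |F n ω - c| ∂P := abs_integral_le_integral_abs
    _ ≤ ∫ ω, (ε / 4 + S.indicator (fun _ => (2 : ℝ)) ω) ∂P := by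
        refine integral_mono (hint.sub (integrable_const c)).abs ?_ hle
        exact (integrable_const _).add ((integrable_const _).indicator hSm)
    _ = ε / 4 + P.real S * 2 := by
        rw [integral_add (integrable_const _) ((integrable_const _).indicator hSm),
          integral_indicator_const _ hSm]
        simp
    _ < ε := by linarith

lemma det_meas {Ω : Type*} [MeasurableSpace Ω] {N : ℕ} (M : Ω → Matrix (Fin N) (Fin N) ℂ)
    (hM : ∀ i j, Measurable fun ω => M ω i j) : Measurable fun ω => (M ω).det := by
  simp only [Matrix.det_apply']
  refine Finset.measurable_fun_sum _ fun σ _ => measurable_const.mul ?_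
  exact Finset.measurable_fun_prod _ fun i _ => hM _ _

lemma inv_meas {Ω : Type*} [MeasurableSpace Ω] {N : ℕ} (M : Ω → Matrix (Fin N) (Fin N) ℂ)
    (hM : ∀ i j, Measurable fun ω => M ω i j) (i j : Fin N) : Measurable fun ω => (M ω)⁻¹ i j := by
  simp only [Matrix.inv_def, Ring.inverse_eq_inv', Matrix.smul_apply, smul_eq_mul]
  refine (det_meas M hM).inv.mul ?_
  simp only [Matrix.adjugate_apply]
  refine det_meas _ fun a b => ?_
  simp only [Matrix.updateRow_apply]
  split_ifs
  · exact measurable_const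
  · exact hM _ _

lemma pow_meas {Ω : Type*} [MeasurableSpace Ω] {N : ℕ} (M : Ω → Matrix (Fin N) (Fin N) ℂ)
    (hM : ∀ i j, Measurable fun ω => M ω i j) (k : ℕ) :
    ∀ i j, Measurable fun ω => (M ω ^ k) i j := by
  induction k with
  | zero => intro i j; simp
  | succ k ih =>
    intro i j
    simp only [pow_succ, Matrix.mul_apply]
    exact Finset.measurable_fun_sum _ fun l _ => (ih _ _).mul (hM _ _)

/-- normalized trace of powers of the Cayley transform -/
def ph {N : ℕ} (k : ℕ) (A : Matrix (Fin N) (Fin N) ℝ) : ℂ := (N : ℂ)⁻¹ * (cay A ^ k).trace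

lemma ph_meas {Ω : Type*} [MeasurableSpace Ω] {N : ℕ} (k : ℕ) (M : Ω → Matrix (Fin N) (Fin N) ℝ)
    (hM : ∀ i j, Measurable fun ω => M ω i j) : Measurable fun ω => ph k (M ω) := by
  unfold ph
  refine measurable_const.mul ?_
  simp only [Matrix.trace, Matrix.diag]
  refine Finset.measurable_fun_sum _ fun i _ => pow_meas _ (fun i j => ?_) _ _ _
  simp only [cay, rs, Matrix.add_apply, Matrix.smul_apply, smul_eq_mul]
  refine measurable_const.add (measurable_const.mul (inv_meas _ (fun i j => ?_) _ _))
  simp only [Matrix.sub_apply, cl, Matrix.map_apply]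
  exact (Complex.measurable_ofReal.comp (hM i j)).sub measurable_const

lemma scaledW_herm {Ω : Type*} (X : ℤ → ℤ → Ω → ℝ) (N : ℕ) (ω : Ω) :
    (scaledW X N ω).IsHermitian := by
  ext i j
  simp [scaledW, add_comm]

lemma ph_eq {N : ℕ} (k : ℕ) (A : Matrix (Fin N) (Fin N) ℝ) (hA : A.IsHermitian) :
    ph k A = (N : ℂ)⁻¹ * ∑ j, uu (hA.eigenvalues j) ^ k := by
  rw [ph, cay_pow_trace A hA]

lemma ph_norm {N : ℕ} (k : ℕ) (A : Matrix (Fin N) (Fin N) ℝ) (hA : A.IsHermitian) :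
    ‖ph k A‖ ≤ 1 := by
  rw [ph_eq k A hA, norm_mul, norm_inv]
  have : ‖∑ j, uu (hA.eigenvalues j) ^ k‖ ≤ N := by
    refine (norm_sum_le _ _).trans ?_
    simp [uu_norm]
  simp only [Complex.norm_natCast]
  rcases Nat.eq_zero_or_pos N with h | h
  · subst h; simp
  · have hN : (0 : ℝ) < N := by exact_mod_cast h
    rw [inv_mul_le_iff₀ hN]; linarith

lemma esd_re {N : ℕ} (k : ℕ) (A : Matrix (Fin N) (Fin N) ℝ) (hA : A.IsHermitian) :
    esdEval A (fun x => (uu x ^ k).re) = (ph k A).re := by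
  have : ((N : ℂ)⁻¹) = (((N : ℝ)⁻¹ : ℝ) : ℂ) := by push_cast; rfl
  rw [ph_eq k A hA, esdEval, dif_pos hA, this, Complex.re_ofReal_mul, Complex.re_sum]

lemma esd_im {N : ℕ} (k : ℕ) (A : Matrix (Fin N) (Fin N) ℝ) (hA : A.IsHermitian) :
    esdEval A (fun x => (uu x ^ k).im) = (ph k A).im := by
  have : ((N : ℂ)⁻¹) = (((N : ℝ)⁻¹ : ℝ) : ℂ) := by push_cast; rfl
  rw [ph_eq k A hA, esdEval, dif_pos hA, this, Complex.im_ofReal_mul, Complex.im_sum]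

lemma scaledW_meas {Ω : Type*} [MeasurableSpace Ω] (X : ℤ → ℤ → Ω → ℝ)
    (hX : ∀ j k, Measurable (X j k)) (N : ℕ) (i j : Fin N) :
    Measurable fun ω => scaledW X N ω i j := by
  unfold scaledW
  exact measurable_const.mul ((hX _ _).add (hX _ _))

lemma ph_tendsto {Ω : Type*} [MeasurableSpace Ω] (P : Measure Ω) [IsProbabilityMeasure P]
    (X : ℤ → ℤ → Ω → ℝ) (hX : ∀ j k, Measurable (X j k)) (μ : Measure ℝ) [IsProbabilityMeasure μ]
    (h : ESDTendstoInProb P (scaledW X) μ) (k : ℕ) :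
    Tendsto (fun N => ∫ ω, ph k (scaledW X N ω) ∂P) atTop (nhds (∫ x, uu x ^ k ∂μ)) := by
  have hm : ∀ N, Measurable fun ω => ph k (scaledW X N ω) := fun N =>
    ph_meas k _ (scaledW_meas X hX N)
  have hi : ∀ N, Integrable (fun ω => ph k (scaledW X N ω)) P := fun N =>
    Integrable.of_bound (hm N).aestronglyMeasurable 1
      (Eventually.of_forall fun ω => ph_norm k _ (scaledW_herm X N ω))
  have hu : Integrable (fun x => uu x ^ k) μ :=
    Integrable.of_bound (uu_cont.pow k).aestronglyMeasurable 1
      (Eventually.of_forall fun x => (uu_pow_norm x k).le)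
  have hcn : ‖∫ x, uu x ^ k ∂μ‖ ≤ 1 := by
    refine (norm_integral_le_of_norm_le_const (C := 1) (Eventually.of_forall fun x => (uu_pow_norm x k).le)).trans ?_
    simp
  have e1 : ∫ x, (uu x ^ k).re ∂μ = (∫ x, uu x ^ k ∂μ).re := integral_re hu
  have e2 : ∫ x, (uu x ^ k).im ∂μ = (∫ x, uu x ^ k ∂μ).im := integral_im hu
  have r1 : Tendsto (fun N => ∫ ω, (ph k (scaledW X N ω)).re ∂P) atTop
      (nhds (∫ x, uu x ^ k ∂μ).re) := by
    refine exp_of_prob P _ _ (fun N => Complex.measurable_re.comp (hm N)) (fun N ω =>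
      (Complex.abs_re_le_norm _).trans (ph_norm k _ (scaledW_herm X N ω)))
      ((Complex.abs_re_le_norm _).trans hcn) ?_
    have := h (fun x => (uu x ^ k).re) (Complex.continuous_re.comp (uu_cont.pow k))
      ⟨1, fun x => (Complex.abs_re_le_norm _).trans (uu_pow_norm x k).le⟩
    simp only [esd_re k _ (scaledW_herm X _ _), e1] at this
    exact this
  have r2 : Tendsto (fun N => ∫ ω, (ph k (scaledW X N ω)).im ∂P) atTop
      (nhds (∫ x, uu x ^ k ∂μ).im) := by
    refine exp_of_prob P _ _ (fun N => Complex.measurable_im.comp (hm N)) (fun N ω =>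
      (Complex.abs_im_le_norm _).trans (ph_norm k _ (scaledW_herm X N ω)))
      ((Complex.abs_im_le_norm _).trans hcn) ?_
    have := h (fun x => (uu x ^ k).im) (Complex.continuous_im.comp (uu_cont.pow k))
      ⟨1, fun x => (Complex.abs_im_le_norm _).trans (uu_pow_norm x k).le⟩
    simp only [esd_im k _ (scaledW_herm X _ _), e2] at this
    exact this
  have e3 : ∀ N, ∫ ω, ph k (scaledW X N ω) ∂P = ((∫ ω, (ph k (scaledW X N ω)).re ∂P : ℝ) : ℂ)
      + ((∫ ω, (ph k (scaledW X N ω)).im ∂P : ℝ) : ℂ) * Complex.I := by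
    intro N
    exact (integral_re_add_im (hi N)).symm
  simp only [e3]
  rw [← Complex.re_add_im (∫ x, uu x ^ k ∂μ)]
  exact (Complex.continuous_ofReal.continuousAt.tendsto.comp r1).add
    ((Complex.continuous_ofReal.continuousAt.tendsto.comp r2).mul_const _)

end ProbPart
section GaussPart

lemma gr_sq (v : NNReal) : ∫ x, x ^ 2 ∂(gaussianReal 0 v) = v := by
  have h := variance_fun_id_gaussianReal (μ := 0) (v := v)
  rw [variance_of_integral_eq_zero measurable_id'.aemeasurable integral_id_gaussianReal] at h
  exact h

lemma law_sq {Ω : Type*} [MeasurableSpace Ω] (P : Measure Ω) (Z : Ω → ℝ) (hZ : Measurable Z)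
    (v : NNReal) (h : P.map Z = gaussianReal 0 v) :
    MemLp Z 2 P ∧ ∫ ω, Z ω ^ 2 ∂P = v ∧
      ∫ ω, Complex.exp ((Z ω : ℂ) * Complex.I) ∂P = Complex.exp (-(v : ℂ) / 2) := by
  refine ⟨?_, ?_, ?_⟩
  · have h1 : MemLp id 2 (P.map Z) := by
      rw [h]; exact memLp_id_gaussianReal' 2 (by simp)
    exact (memLp_map_measure_iff (by fun_prop) hZ.aemeasurable).mp h1
  · rw [← gr_sq, ← h, integral_map hZ.aemeasurable (by fun_prop)]
  · have h1 := charFun_gaussianReal (μ := 0) (v := v) 1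
    rw [charFun_apply_real, ← h, integral_map hZ.aemeasurable (by fun_prop)] at h1
    simpa [neg_div] using h1

lemma sg_law {Ω : Type*} [MeasurableSpace Ω] (P : Measure Ω) (X : ℤ → ℤ → Ω → ℝ)
    (hX : StatGauss P X) {ι : Type*} [Fintype ι] (e : ι → ℤ × ℤ) (c : ι → ℝ) :
    ∃ v : NNReal, P.map (fun ω => ∑ i, c i * X (e i).1 (e i).2 ω) = gaussianReal 0 v := by
  obtain ⟨v, hv⟩ := hX.gauss (∑ i, Finsupp.single (e i) (c i))
  refine ⟨v, ?_⟩
  rw [← hv]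
  congr 1
  funext ω
  have := Finsupp.sum_finsetSum_index (s := Finset.univ) (g := fun i => Finsupp.single (e i) (c i))
    (h := fun (p : ℤ × ℤ) (a : ℝ) => a * X p.1 p.2 ω) (by simp) (by intros; ring)
  rw [Finsupp.sum] at this
  rw [← this]
  simp

lemma sg_memLp {Ω : Type*} [MeasurableSpace Ω] (P : Measure Ω) (X : ℤ → ℤ → Ω → ℝ)
    (hX : StatGauss P X) (j k : ℤ) : MemLp (X j k) 2 P := by
  obtain ⟨v, hv⟩ := sg_law P X hX (ι := Unit) (fun _ => (j, k)) (fun _ => 1)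
  have := (law_sq P _ (by simpa using hX.meas j k) v hv).1
  simpa using this

/-- covariance -/
def cv {Ω : Type*} [MeasurableSpace Ω] (P : Measure Ω) (X : ℤ → ℤ → Ω → ℝ) (u v : ℤ) : ℝ :=
  ∫ ω, X 0 0 ω * X u v ω ∂P

lemma sg_char {Ω : Type*} [MeasurableSpace Ω] (P : Measure Ω) (X : ℤ → ℤ → Ω → ℝ)
    (hX : StatGauss P X) {ι : Type*} [Fintype ι] (e : ι → ℤ × ℤ) (c : ι → ℝ) :
    ∫ ω, Complex.exp (((∑ i, c i * X (e i).1 (e i).2 ω : ℝ) : ℂ) * Complex.I) ∂P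
      = Complex.exp (-((∑ i, ∑ j, c i * c j *
          cv P X ((e j).1 - (e i).1) ((e j).2 - (e i).2) : ℝ) : ℂ) / 2) := by
  obtain ⟨v, hv⟩ := sg_law P X hX e c
  have hm : Measurable (fun ω => ∑ i, c i * X (e i).1 (e i).2 ω) :=
    Finset.measurable_fun_sum _ fun i _ => measurable_const.mul (hX.meas _ _)
  obtain ⟨-, h2, h3⟩ := law_sq P _ hm v hv
  have hvv : ((v : NNReal) : ℂ) = (((v : NNReal) : ℝ) : ℂ) := rfl
  rw [h3, hvv, ← h2]
  congr 4
  have hint : ∀ i j, Integrable (fun ω => X (e i).1 (e i).2 ω * X (e j).1 (e j).2 ω) P :=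
    fun i j => (sg_memLp P X hX _ _).integrable_mul (sg_memLp P X hX _ _)
  have e1 : ∀ ω, (∑ i, c i * X (e i).1 (e i).2 ω) ^ 2
      = ∑ i, ∑ j, c i * c j * (X (e i).1 (e i).2 ω * X (e j).1 (e j).2 ω) := by
    intro ω
    rw [sq, Finset.sum_mul_sum]
    refine Finset.sum_congr rfl fun i _ => Finset.sum_congr rfl fun j _ => by ring
  simp only [e1]
  rw [integral_finsetSum _ fun i _ => integrable_finsetSum _ fun j _ => (hint i j).const_mul _]
  refine Finset.sum_congr rfl fun i _ => ?_
  rw [integral_finsetSum _ fun j _ => (hint i j).const_mul _]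
  refine Finset.sum_congr rfl fun j _ => ?_
  rw [integral_const_mul]
  congr 1
  have := hX.stat (e i).1 (e i).2 ((e j).1 - (e i).1) ((e j).2 - (e i).2)
  rw [add_sub_cancel, add_sub_cancel] at this
  exact this

/-- iid standard Gaussians -/
def gs (κ : Type*) [Fintype κ] : Measure (κ → ℝ) := Measure.pi fun _ => gaussianReal 0 1

instance (κ : Type*) [Fintype κ] : IsProbabilityMeasure (gs κ) := by
  unfold gs; infer_instance

lemma gs_char (κ : Type*) [Fintype κ] (c : κ → ℝ) :
    ∫ x, Complex.exp (((∑ m, c m * x m : ℝ) : ℂ) * Complex.I) ∂(gs κ)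
      = Complex.exp (-((∑ m, c m ^ 2 : ℝ) : ℂ) / 2) := by
  have e1 : ∀ x : κ → ℝ, Complex.exp (((∑ m, c m * x m : ℝ) : ℂ) * Complex.I)
      = ∏ m, Complex.exp ((c m : ℂ) * (x m : ℂ) * Complex.I) := by
    intro x
    rw [← Complex.exp_sum, ← Finset.sum_mul]
    push_cast; rfl
  simp only [e1, gs]
  rw [integral_fintype_prod_eq_prod (f := fun m (y : ℝ) => Complex.exp ((c m : ℂ) * (y : ℂ) * Complex.I))]
  have e2 : ∀ m, ∫ y : ℝ, Complex.exp ((c m : ℂ) * (y : ℂ) * Complex.I) ∂(gaussianReal 0 1)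
      = Complex.exp (-((c m : ℂ) ^ 2) / 2) := by
    intro m
    rw [← charFun_apply_real, charFun_gaussianReal]
    congr 1; simp [neg_div]
  simp only [e2]
  rw [← Complex.exp_sum]
  congr 1
  push_cast
  rw [← Finset.sum_div, Finset.sum_neg_distrib]

lemma gs_law (κ : Type*) [Fintype κ] (c : κ → ℝ) :
    (gs κ).map (fun x => ∑ m, c m * x m) = gaussianReal 0 (Real.toNNReal (∑ m, c m ^ 2)) := by
  have hm : Measurable (fun x : κ → ℝ => ∑ m, c m * x m) := by fun_prop
  have : IsProbabilityMeasure ((gs κ).map (fun x => ∑ m, c m * x m)) :=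
    Measure.isProbabilityMeasure_map hm.aemeasurable
  refine Measure.ext_of_charFun ?_
  funext t
  rw [charFun_apply_real, charFun_gaussianReal, integral_map hm.aemeasurable (by fun_prop)]
  have := gs_char κ (fun m => t * c m)
  have e : ∀ x : κ → ℝ, ∑ m, t * c m * x m = t * ∑ m, c m * x m := by
    intro x; rw [Finset.mul_sum]; exact Finset.sum_congr rfl fun _ _ => by ring
  simp only [e, Complex.ofReal_mul] at this
  rw [this]
  congr 1
  have h0 : 0 ≤ ∑ m, c m ^ 2 := Finset.sum_nonneg fun _ _ => sq_nonneg _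
  have h1 : (((Real.toNNReal (∑ m, c m ^ 2)) : NNReal) : ℂ) = ((∑ m, c m ^ 2 : ℝ) : ℂ) := by
    rw [Real.coe_toNNReal _ h0]
  rw [h1]
  push_cast
  simp only [mul_pow, ← Finset.mul_sum]
  ring

lemma gs_sq (κ : Type*) [Fintype κ] (c : κ → ℝ) :
    Integrable (fun x : κ → ℝ => (∑ m, c m * x m) ^ 2) (gs κ) ∧ 
    ∫ x, (∑ m, c m * x m) ^ 2 ∂(gs κ) = ∑ m, c m ^ 2 := by
  have hm : Measurable (fun x : κ → ℝ => ∑ m, c m * x m) := by fun_prop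
  obtain ⟨h1, h2, -⟩ := law_sq _ _ hm _ (gs_law κ c)
  refine ⟨h1.integrable_sq, ?_⟩
  rw [h2, Real.coe_toNNReal _ (Finset.sum_nonneg fun _ _ => sq_nonneg _)]

lemma law_ext {Ω Ω' : Type*} [MeasurableSpace Ω] [MeasurableSpace Ω'] (P : Measure Ω)
    (Q : Measure Ω') [IsProbabilityMeasure P] [IsProbabilityMeasure Q] {ι : Type*} [Fintype ι]
    (S : Ω → ι → ℝ) (T : Ω' → ι → ℝ) (hS : Measurable S) (hT : Measurable T)
    (h : ∀ t : ι → ℝ, ∫ ω, Complex.exp (((∑ i, t i * S ω i : ℝ) : ℂ) * Complex.I) ∂P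
      = ∫ ω, Complex.exp (((∑ i, t i * T ω i : ℝ) : ℂ) * Complex.I) ∂Q) :
    P.map S = Q.map T := by
  classical
  have : IsProbabilityMeasure (P.map S) := Measure.isProbabilityMeasure_map hS.aemeasurable
  have : IsProbabilityMeasure (Q.map T) := Measure.isProbabilityMeasure_map hT.aemeasurable
  refine Measure.ext_of_charFunDual ?_
  funext L
  have hL : ∀ y : ι → ℝ, L y = ∑ i, L (Pi.single i 1) * y i := by
    intro y
    conv_lhs => rw [pi_eq_sum_univ' y]
    rw [map_sum]
    refine Finset.sum_congr rfl fun i _ => ?_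
    rw [map_smul, smul_eq_mul, mul_comm]
  rw [charFunDual_apply, charFunDual_apply, integral_map hS.aemeasurable (by fun_prop),
    integral_map hT.aemeasurable (by fun_prop)]
  have := h (fun i => L (Pi.single i 1))
  simp only [← hL] at this
  exact this

open scoped MatrixOrder Matrix in
lemma psd_factor {ι : Type*} [Fintype ι] (e : ι → ℤ × ℤ) (ρ : Measure (ℝ × ℝ)) [IsFiniteMeasure ρ] :
    ∃ B : ι → ι → ℝ, ∀ p q, ∑ m, B m p * B m q
      = ∫ θ, Real.cos ((((e q).1 - (e p).1 : ℤ) : ℝ) * θ.1 + (((e q).2 - (e p).2 : ℤ) : ℝ) * θ.2) ∂ρ := by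
  classical
  set M : Matrix ι ι ℝ := fun p q => ∫ θ, Real.cos ((((e q).1 - (e p).1 : ℤ) : ℝ) * θ.1 + (((e q).2 - (e p).2 : ℤ) : ℝ) * θ.2) ∂ρ with hM
  have hint : ∀ p q, Integrable (fun θ : ℝ × ℝ => Real.cos ((((e q).1 - (e p).1 : ℤ) : ℝ) * θ.1 + (((e q).2 - (e p).2 : ℤ) : ℝ) * θ.2)) ρ := by
    intro p q
    refine Integrable.of_bound (by fun_prop) 1 (Eventually.of_forall fun θ => Real.abs_cos_le_one _)
  have hpsd : M.PosSemidef := by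
    refine Matrix.PosSemidef.of_dotProduct_mulVec_nonneg ?_ ?_
    · ext p q
      rw [Matrix.conjTranspose_apply, star_trivial]
      refine integral_congr_ae (Eventually.of_forall fun θ => ?_)
      beta_reduce
      rw [← Real.cos_neg]
      congr 1
      push_cast; ring
    · intro x
      have e1 : star x ⬝ᵥ M *ᵥ x = ∑ p, ∑ q, ∫ θ, x p * x q * Real.cos ((((e q).1 - (e p).1 : ℤ) : ℝ) * θ.1 + (((e q).2 - (e p).2 : ℤ) : ℝ) * θ.2) ∂ρ := by
        simp only [dotProduct, Matrix.mulVec, Finset.mul_sum, star_trivial, integral_const_mul]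
        refine Finset.sum_congr rfl fun i _ => Finset.sum_congr rfl fun j _ => by ring
      have e2 : ∀ p, ∑ q, ∫ θ, x p * x q * Real.cos ((((e q).1 - (e p).1 : ℤ) : ℝ) * θ.1 + (((e q).2 - (e p).2 : ℤ) : ℝ) * θ.2) ∂ρ
        = ∫ θ, ∑ q, x p * x q * Real.cos ((((e q).1 - (e p).1 : ℤ) : ℝ) * θ.1 + (((e q).2 - (e p).2 : ℤ) : ℝ) * θ.2) ∂ρ :=
        fun p => (integral_finsetSum _ fun q _ => (hint p q).const_mul _).symm
      rw [e1]
      simp only [e2]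
      rw [← integral_finsetSum _ fun p _ => integrable_finsetSum _ fun q _ => (hint p q).const_mul _]
      refine integral_nonneg fun θ => ?_
      have e3 : ∑ p, ∑ q, x p * x q * Real.cos ((((e q).1 - (e p).1 : ℤ) : ℝ) * θ.1 + (((e q).2 - (e p).2 : ℤ) : ℝ) * θ.2)
        = (∑ p, x p * Real.cos ((e p).1 * θ.1 + (e p).2 * θ.2)) ^ 2
          + (∑ p, x p * Real.sin ((e p).1 * θ.1 + (e p).2 * θ.2)) ^ 2 := by
        rw [sq, sq, Finset.sum_mul_sum, Finset.sum_mul_sum, ← Finset.sum_add_distrib]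
        refine Finset.sum_congr rfl fun p _ => ?_
        rw [← Finset.sum_add_distrib]
        refine Finset.sum_congr rfl fun q _ => ?_
        have : (((e q).1 - (e p).1 : ℤ) : ℝ) * θ.1 + (((e q).2 - (e p).2 : ℤ) : ℝ) * θ.2
          = ((e q).1 * θ.1 + (e q).2 * θ.2) - ((e p).1 * θ.1 + (e p).2 * θ.2) := by push_cast; ring
        rw [this, Real.cos_sub]; ring
      change 0 ≤ ∑ p, ∑ q, x p * x q * Real.cos ((((e q).1 - (e p).1 : ℤ) : ℝ) * θ.1 + (((e q).2 - (e p).2 : ℤ) : ℝ) * θ.2)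
      rw [e3]; positivity
  obtain ⟨B, hB⟩ := CStarAlgebra.nonneg_iff_eq_star_mul_self.mp hpsd.nonneg
  refine ⟨B, fun p q => ?_⟩
  have := congrFun (congrFun hB p) q
  rw [Matrix.mul_apply] at this
  have h2 : M p q = ∑ m, B m p * B m q := by simpa using this
  exact h2.symm

end GaussPart
section MainPart

/-- index of the entry -/
def ix {N : ℕ} (p : Fin N × Fin N) : ℤ × ℤ := (((p.1 : ℕ) : ℤ) + 1, ((p.2 : ℕ) : ℤ) + 1)

/-- cosine or sine -/
def tg (b : Bool) (x : ℝ) : ℝ := if b then Real.cos x else Real.sin x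

lemma trig_rank (N : ℕ) (θ : ℝ × ℝ) (b : Bool) :
    ∃ (t : Fin 4 → ℝ) (v : Fin 4 → Fin N → ℝ), ∀ i j : Fin N,
      tg b ((ix (i, j)).1 * θ.1 + (ix (i, j)).2 * θ.2) + tg b ((ix (j, i)).1 * θ.1 + (ix (j, i)).2 * θ.2)
        = ∑ m, t m * (v m i * v m j) := by
  set c : Fin N → ℝ := fun i => Real.cos ((((i : ℕ) : ℤ) + 1 : ℤ) * θ.1) with hc
  set s : Fin N → ℝ := fun i => Real.sin ((((i : ℕ) : ℤ) + 1 : ℤ) * θ.1) with hs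
  set c' : Fin N → ℝ := fun i => Real.cos ((((i : ℕ) : ℤ) + 1 : ℤ) * θ.2) with hc'
  set s' : Fin N → ℝ := fun i => Real.sin ((((i : ℕ) : ℤ) + 1 : ℤ) * θ.2) with hs'
  cases b
  · refine ⟨![1/2, -1/2, 1/2, -1/2], ![s + c', s - c', c + s', c - s'], fun i j => ?_⟩
    simp only [tg, ix, Fin.sum_univ_four]
    simp only [Bool.false_eq_true, if_false, Real.sin_add]
    change s i * c' j + c i * s' j + (s j * c' i + c j * s' i) =
      1/2 * ((s i + c' i) * (s j + c' j)) + -1/2 * ((s i - c' i) * (s j - c' j))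
      + 1/2 * ((c i + s' i) * (c j + s' j)) + -1/2 * ((c i - s' i) * (c j - s' j))
    ring
  · refine ⟨![1/2, -1/2, -1/2, 1/2], ![c + c', c - c', s + s', s - s'], fun i j => ?_⟩
    simp only [tg, ix, Fin.sum_univ_four]
    simp only [if_true, Real.cos_add]
    change c i * c' j - s i * s' j + (c j * c' i - s j * s' i) =
      1/2 * ((c i + c' i) * (c j + c' j)) + -1/2 * ((c i - c' i) * (c j - c' j))
      + -1/2 * ((s i + s' i) * (s j + s' j)) + 1/2 * ((s i - s' i) * (s j - s' j))
    ring

lemma quad_swap {N : ℕ} (c : Fin N × Fin N → ℝ) (hc : ∀ p, c p.swap = c p) (H : ℤ → ℤ → ℝ)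
    (hH : ∀ u v, H u v = - H v u) :
    ∑ p, ∑ q, c p * c q * H ((ix q).1 - (ix p).1) ((ix q).2 - (ix p).2) = 0 := by
  set S := ∑ p, ∑ q, c p * c q * H ((ix q).1 - (ix p).1) ((ix q).2 - (ix p).2) with hS
  have h1 : S = ∑ p : Fin N × Fin N, ∑ q : Fin N × Fin N, c p.swap * c q.swap *
      H ((ix q.swap).1 - (ix p.swap).1) ((ix q.swap).2 - (ix p.swap).2) := by
    rw [hS, ← (Equiv.prodComm (Fin N) (Fin N)).sum_comp]
    refine Finset.sum_congr rfl fun p _ => ?_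
    rw [← (Equiv.prodComm (Fin N) (Fin N)).sum_comp]
    rfl
  have h2 : S = - S := by
    conv_lhs => rw [h1]
    rw [hS, ← Finset.sum_neg_distrib]
    refine Finset.sum_congr rfl fun p _ => ?_
    rw [← Finset.sum_neg_distrib]
    refine Finset.sum_congr rfl fun q _ => ?_
    rw [hc, hc, hH]
    simp only [ix, Prod.fst_swap, Prod.snd_swap]
    ring
  linarith

lemma sum_sym {N : ℕ} (t : Fin N × Fin N → ℝ) (x : Fin N × Fin N → ℝ) :
    ∑ p, t p * (x p + x p.swap) = ∑ p, (t p + t p.swap) * x p := by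
  have : ∑ p : Fin N × Fin N, t p * x p.swap = ∑ p : Fin N × Fin N, t p.swap * x p := by
    rw [← (Equiv.prodComm (Fin N) (Fin N)).sum_comp]
    simp
  simp only [mul_add, add_mul, Finset.sum_add_distrib, this]

/-- matrix from a vector -/
def vmat {N : ℕ} (y : Fin N × Fin N → ℝ) : Matrix (Fin N) (Fin N) ℝ :=
  fun i j => (Real.sqrt N)⁻¹ * y (i, j)

lemma scaledW_vmat {Ω : Type*} (X : ℤ → ℤ → Ω → ℝ) (N : ℕ) (ω : Ω) :
    scaledW X N ω = vmat (fun p => X (ix p).1 (ix p).2 ω + X (ix p.swap).1 (ix p.swap).2 ω) := rfl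

lemma vmat_meas (N k : ℕ) : Measurable (fun y : Fin N × Fin N → ℝ => ph k (vmat y)) := by
  refine ph_meas k _ fun i j => ?_
  exact measurable_const.mul (measurable_pi_apply _)

lemma law_eq_s12 {Ω Ω' : Type*} [MeasurableSpace Ω] [MeasurableSpace Ω'] (P : Measure Ω)
    (Q : Measure Ω') [IsProbabilityMeasure P] [IsProbabilityMeasure Q] (X : ℤ → ℤ → Ω → ℝ)
    (Y : ℤ → ℤ → Ω' → ℝ) (hX : StatGauss P X) (hY : StatGauss Q Y) (N k : ℕ) {κ : Type*}
    [Fintype κ] (G : κ → Fin N × Fin N → ℝ) (K : ℤ → ℤ → ℝ)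
    (hG : ∀ p q, ∑ m, G m p * G m q = K ((ix q).1 - (ix p).1) ((ix q).2 - (ix p).2))
    (hK : ∀ u v, cv P X u v + cv P X v u = cv Q Y u v + cv Q Y v u + (K u v + K v u)) :
    ∫ ω, ph k (scaledW X N ω) ∂P = ∫ z, ph k (vmat (fun p =>
      (Y (ix p).1 (ix p).2 z.1 + Y (ix p.swap).1 (ix p.swap).2 z.1)
        + ∑ m, (G m p + G m p.swap) * z.2 m)) ∂(Q.prod (gs κ)) := by
  set S : Ω → Fin N × Fin N → ℝ := fun ω p =>
    X (ix p).1 (ix p).2 ω + X (ix p.swap).1 (ix p.swap).2 ω with hS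
  set T : Ω' × (κ → ℝ) → Fin N × Fin N → ℝ := fun z p =>
      (Y (ix p).1 (ix p).2 z.1 + Y (ix p.swap).1 (ix p.swap).2 z.1)
        + ∑ m, (G m p + G m p.swap) * z.2 m with hT
  have hSm : Measurable S := measurable_pi_lambda _ fun p => (hX.meas _ _).add (hX.meas _ _)
  have hTm : Measurable T := by
    refine measurable_pi_lambda _ fun p => ?_
    refine (((hY.meas _ _).comp measurable_fst).add ((hY.meas _ _).comp measurable_fst)).add ?_
    refine Finset.measurable_fun_sum _ fun m _ => measurable_const.mul ?_
    exact (measurable_pi_apply m).comp measurable_snd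
  have hlaw : P.map S = (Q.prod (gs κ)).map T := by
    refine law_ext P _ S T hSm hTm fun t => ?_
    set c : Fin N × Fin N → ℝ := fun p => t p + t p.swap with hc
    have hcs : ∀ p, c p.swap = c p := fun p => by simp [hc, add_comm]
    have e1 : ∀ ω, ∑ p, t p * S ω p = ∑ p, c p * X (ix p).1 (ix p).2 ω := fun ω =>
      sum_sym t (fun p => X (ix p).1 (ix p).2 ω)
    have e2 : ∀ z, ∑ p, t p * T z p = ∑ p, c p * Y (ix p).1 (ix p).2 z.1
        + ∑ m, (∑ p, c p * G m p) * z.2 m := by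
      intro z
      have a1 := sum_sym t (fun p => Y (ix p).1 (ix p).2 z.1)
      have a2 : ∑ p, t p * ∑ m, (G m p + G m p.swap) * z.2 m
          = ∑ m, (∑ p, c p * G m p) * z.2 m := by
        simp only [Finset.mul_sum]
        rw [Finset.sum_comm]
        refine Finset.sum_congr rfl fun m _ => ?_
        rw [← sum_sym t (fun p => G m p), Finset.sum_mul]
        exact Finset.sum_congr rfl fun p _ => by ring
      rw [← a2, ← a1, ← Finset.sum_add_distrib]
      exact Finset.sum_congr rfl fun p _ => by simp only [hT]; ring
    simp only [e1, e2]
    rw [sg_char P X hX]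
    have e3 : ∀ z : Ω' × (κ → ℝ), Complex.exp (((∑ p, c p * Y (ix p).1 (ix p).2 z.1
        + ∑ m, (∑ p, c p * G m p) * z.2 m : ℝ) : ℂ) * Complex.I)
        = Complex.exp (((∑ p, c p * Y (ix p).1 (ix p).2 z.1 : ℝ) : ℂ) * Complex.I) *
          Complex.exp (((∑ m, (∑ p, c p * G m p) * z.2 m : ℝ) : ℂ) * Complex.I) := by
      intro z
      rw [← Complex.exp_add, ← add_mul, ← Complex.ofReal_add]
    simp only [e3]
    rw [integral_prod_mul (f := fun ω => Complex.exp (((∑ p, c p * Y (ix p).1 (ix p).2 ω : ℝ) : ℂ) * Complex.I))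
      (g := fun x : κ → ℝ => Complex.exp (((∑ m, (∑ p, c p * G m p) * x m : ℝ) : ℂ) * Complex.I)),
      sg_char Q Y hY, gs_char, ← Complex.exp_add]
    congr 1
    rw [← add_div, ← neg_add, ← Complex.ofReal_add]
    congr 3
    have e4 : ∑ m, (∑ p, c p * G m p) ^ 2
        = ∑ p, ∑ q, c p * c q * K ((ix q).1 - (ix p).1) ((ix q).2 - (ix p).2) := by
      simp only [sq, Finset.sum_mul_sum]
      simp only [← hG, Finset.mul_sum]
      rw [Finset.sum_comm]
      refine Finset.sum_congr rfl fun p _ => ?_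
      rw [Finset.sum_comm]
      refine Finset.sum_congr rfl fun q _ => Finset.sum_congr rfl fun m _ => by ring
    rw [e4]
    have e5 := quad_swap c hcs (fun u v => cv P X u v - cv Q Y u v - K u v)
      (fun u v => by have := hK u v; linarith)
    simp only [mul_sub, Finset.sum_sub_distrib] at e5
    linarith
  have hm := vmat_meas N k
  calc _ = ∫ ω, ph k (vmat (S ω)) ∂P := rfl
    _ = ∫ y, ph k (vmat y) ∂(P.map S) := (integral_map hSm.aemeasurable hm.aestronglyMeasurable).symm
    _ = ∫ z, ph k (vmat (T z)) ∂(Q.prod (gs κ)) := by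
      rw [hlaw, integral_map hTm.aemeasurable hm.aestronglyMeasurable]

lemma main_est {Ω Ω' : Type*} [MeasurableSpace Ω] [MeasurableSpace Ω'] (P : Measure Ω)
    (Q : Measure Ω') [IsProbabilityMeasure P] [IsProbabilityMeasure Q] (X : ℤ → ℤ → Ω → ℝ)
    (Y : ℤ → ℤ → Ω' → ℝ) (hX : StatGauss P X) (hY : StatGauss Q Y) (N k : ℕ) (hN : 0 < N)
    (F : Finset (ℝ × ℝ)) (a : ℝ × ℝ → ℝ) (ha : ∀ q, 0 ≤ a q) (ρ : Measure (ℝ × ℝ))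
    [IsFiniteMeasure ρ] (s : ℝ) (hs : 0 < s)
    (hK : ∀ u v, cv P X u v + cv P X v u = cv Q Y u v + cv Q Y v u +
      ((∑ q ∈ F, a q * Real.cos (u * q.1 + v * q.2) + ∫ q, Real.cos (u * q.1 + v * q.2) ∂ρ) +
       (∑ q ∈ F, a q * Real.cos (v * q.1 + u * q.2) + ∫ q, Real.cos (v * q.1 + u * q.2) ∂ρ))) :
    ‖∫ ω, ph k (scaledW Y N ω) ∂Q - ∫ ω, ph k (scaledW X N ω) ∂P‖
      ≤ (N : ℝ)⁻¹ * (F.card * 16 * k) + k * (4 * ρ.real Set.univ / s + s) := by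
  obtain ⟨B, hB⟩ := psd_factor (ι := Fin N × Fin N) ix ρ
  have hNr : (0 : ℝ) < N := by exact_mod_cast hN
  set G : (F × Bool) ⊕ (Fin N × Fin N) → Fin N × Fin N → ℝ :=
    Sum.elim (fun m p => Real.sqrt (a m.1.1) * tg m.2 ((ix p).1 * m.1.1.1 + (ix p).2 * m.1.1.2)) B with hG
  have hlaw := law_eq_s12 P Q X Y hX hY N k G
    (fun u v => ∑ q ∈ F, a q * Real.cos (u * q.1 + v * q.2) + ∫ q, Real.cos (u * q.1 + v * q.2) ∂ρ)
    (by
      intro p q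
      rw [Fintype.sum_sum_type]
      simp only [hG, Sum.elim_inl, Sum.elim_inr, hB]
      congr 1
      rw [Fintype.sum_prod_type, ← Finset.sum_coe_sort F]
      refine Finset.sum_congr rfl fun r _ => ?_
      simp only [Fintype.sum_bool, tg, if_true, Bool.false_eq_true, if_false]
      have hsq := Real.mul_self_sqrt (ha r.1)
      have : (((ix q).1 - (ix p).1 : ℤ) : ℝ) * r.1.1 + (((ix q).2 - (ix p).2 : ℤ) : ℝ) * r.1.2
          = ((ix q).1 * r.1.1 + (ix q).2 * r.1.2) - ((ix p).1 * r.1.1 + (ix p).2 * r.1.2) := by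
        push_cast; ring
      rw [this, Real.cos_sub]
      linear_combination (Real.cos ((ix p).1 * r.1.1 + (ix p).2 * r.1.2) * Real.cos ((ix q).1 * r.1.1 + (ix q).2 * r.1.2) + Real.sin ((ix p).1 * r.1.1 + (ix p).2 * r.1.2) * Real.sin ((ix q).1 * r.1.1 + (ix q).2 * r.1.2)) * hsq)
    hK
  set T : Ω' × (((F × Bool) ⊕ (Fin N × Fin N)) → ℝ) → Fin N × Fin N → ℝ := fun z p =>
      (Y (ix p).1 (ix p).2 z.1 + Y (ix p.swap).1 (ix p.swap).2 z.1)
        + ∑ m, (G m p + G m p.swap) * z.2 m with hT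
  have hTm : Measurable T := by
    refine measurable_pi_lambda _ fun p => ?_
    refine (((hY.meas _ _).comp measurable_fst).add ((hY.meas _ _).comp measurable_fst)).add ?_
    refine Finset.measurable_fun_sum _ fun m _ => measurable_const.mul ?_
    exact (measurable_pi_apply m).comp measurable_snd
  choose t v htv using fun (m : F × Bool) => trig_rank N m.1.1 m.2
  -- the small part
  set c : Fin N × Fin N → ((F × Bool) ⊕ (Fin N × Fin N)) → ℝ := fun p => Sum.elim (fun _ => 0) (fun m => B m p + B m p.swap) with hc
  set E : (((F × Bool) ⊕ (Fin N × Fin N)) → ℝ) → Matrix (Fin N) (Fin N) ℝ := fun x i j =>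
    (Real.sqrt N)⁻¹ * ∑ m, c (i, j) m * x m with hE
  set L : (((F × Bool) ⊕ (Fin N × Fin N)) → ℝ) → Matrix (Fin N) (Fin N) ℝ := fun x =>
    ∑ m : (F × Bool) × Fin 4, ((Real.sqrt N)⁻¹ * Real.sqrt (a m.1.1.1) * x (Sum.inl m.1) * t m.1 m.2) •
      Matrix.vecMulVec (v m.1 m.2) (v m.1 m.2) with hL
  have hdec : ∀ z, vmat (T z) = scaledW Y N z.1 + L z.2 + E z.2 := by
    intro z
    ext i j
    have e1 : L z.2 i j = (Real.sqrt N)⁻¹ * ∑ m : F × Bool, (G (Sum.inl m) (i, j) + G (Sum.inl m) (j, i)) * z.2 (Sum.inl m) := by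
      simp only [hL, Matrix.sum_apply, Matrix.smul_apply, Matrix.vecMulVec_apply, smul_eq_mul]
      rw [Fintype.sum_prod_type, Finset.mul_sum]
      refine Finset.sum_congr rfl fun m _ => ?_
      simp only [hG, Sum.elim_inl]
      rw [← mul_add, htv m i j, Finset.mul_sum, Finset.sum_mul, Finset.mul_sum]
      exact Finset.sum_congr rfl fun l _ => by ring
    have e2 : E z.2 i j = (Real.sqrt N)⁻¹ * ∑ m : Fin N × Fin N, (G (Sum.inr m) (i, j) + G (Sum.inr m) (j, i)) * z.2 (Sum.inr m) := by
      simp only [hE, hc, hG]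
      rw [Fintype.sum_sum_type]
      simp
    rw [Matrix.add_apply, Matrix.add_apply, e1, e2, scaledW_vmat]
    simp only [vmat, hT, Prod.swap_prod_mk]
    rw [Fintype.sum_sum_type]
    ring
  have hcsym : ∀ i j, c (i, j) = c (j, i) := by
    intro i j; funext m
    cases m <;> simp [hc, add_comm]
  have hEh : ∀ x, (E x).IsHermitian := by
    intro x
    refine Matrix.IsHermitian.ext fun i j => ?_
    simp only [hE, hcsym i j, star_trivial]
  have hpt : ∀ z : Ω' × (((F × Bool) ⊕ (Fin N × Fin N)) → ℝ), ‖ph k (scaledW Y N z.1) - ph k (vmat (T z))‖ ≤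
      (N : ℝ)⁻¹ * (F.card * 16 * k) + (N : ℝ)⁻¹ * (k * (2 * ((2 * s)⁻¹ * ∑ i, ∑ j, (E z.2 i j) ^ 2 + s / 2 * N))) := by
    intro z
    rw [hdec z]
    obtain ⟨h1, h2⟩ := low_rank_bound (Finset.univ : Finset ((F × Bool) × Fin 4))
      (fun m => (Real.sqrt N)⁻¹ * Real.sqrt (a m.1.1.1) * z.2 (Sum.inl m.1) * t m.1 m.2)
      (fun m => v m.1 m.2) (scaledW Y N z.1) (scaledW_herm Y N z.1) k
    have h3 := frob_pert (scaledW Y N z.1 + L z.2) (E z.2) h1 (hEh z.2) k s hs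
    have hcard : ((Finset.univ : Finset ((F × Bool) × Fin 4)).card : ℝ) * (k * 2) = F.card * 16 * k := by
      simp; ring
    rw [hcard] at h2
    have e : ph k (scaledW Y N z.1) - ph k (scaledW Y N z.1 + L z.2 + E z.2)
      = (N : ℂ)⁻¹ * (((cay (scaledW Y N z.1) ^ k).trace - (cay (scaledW Y N z.1 + L z.2) ^ k).trace)
        + ((cay (scaledW Y N z.1 + L z.2) ^ k).trace - (cay (scaledW Y N z.1 + L z.2 + E z.2) ^ k).trace)) := by
      unfold ph; ring
    rw [e, norm_mul, norm_inv, Complex.norm_natCast, ← mul_add]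
    refine mul_le_mul_of_nonneg_left ((norm_add_le _ _).trans (add_le_add h2 h3)) (by positivity)
  have hEsq : ∀ i j, Integrable (fun x => (E x i j) ^ 2) (gs ((F × Bool) ⊕ (Fin N × Fin N))) ∧
      ∫ x, (E x i j) ^ 2 ∂(gs ((F × Bool) ⊕ (Fin N × Fin N))) ≤ (N : ℝ)⁻¹ * (4 * ρ.real Set.univ) := by
    intro i j
    obtain ⟨h1, h2⟩ := gs_sq ((F × Bool) ⊕ (Fin N × Fin N)) (c (i, j))
    have e : ∀ x, (E x i j) ^ 2 = (N : ℝ)⁻¹ * (∑ m, c (i, j) m * x m) ^ 2 := by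
      intro x
      simp only [hE, mul_pow, inv_pow, Real.sq_sqrt hNr.le]
    simp only [e]
    refine ⟨h1.const_mul _, ?_⟩
    rw [integral_const_mul, h2]
    refine mul_le_mul_of_nonneg_left ?_ (by positivity)
    rw [Fintype.sum_sum_type]
    simp only [hc, Sum.elim_inl, Sum.elim_inr, Prod.swap_prod_mk]
    have b1 : ∀ p, ∑ m, B m p ^ 2 = ρ.real Set.univ := by
      intro p
      have := hB p p
      simp only [sub_self, Int.cast_zero, zero_mul, add_zero, Real.cos_zero, integral_const, smul_eq_mul, mul_one] at this
      rw [← this]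
      exact Finset.sum_congr rfl fun _ _ => sq _
    have b2 : ∑ m, (B m (i, j) + B m (j, i)) ^ 2 ≤ ∑ m, (2 * B m (i, j) ^ 2 + 2 * B m (j, i) ^ 2) :=
      Finset.sum_le_sum fun m _ => by nlinarith [sq_nonneg (B m (i, j) - B m (j, i))]
    rw [Finset.sum_add_distrib, ← Finset.mul_sum, ← Finset.mul_sum, b1, b1] at b2
    simp
    linarith
  have hsumint : Integrable (fun x => ∑ i, ∑ j, (E x i j) ^ 2) (gs ((F × Bool) ⊕ (Fin N × Fin N))) :=
    integrable_finsetSum _ fun i _ => integrable_finsetSum _ fun j _ => (hEsq i j).1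
  have hsum : ∫ x, ∑ i, ∑ j, (E x i j) ^ 2 ∂(gs ((F × Bool) ⊕ (Fin N × Fin N))) ≤ N * (4 * ρ.real Set.univ) := by
    rw [integral_finsetSum _ fun i _ => integrable_finsetSum _ fun j _ => (hEsq i j).1]
    have : ∀ i, ∫ x, ∑ j, (E x i j) ^ 2 ∂(gs ((F × Bool) ⊕ (Fin N × Fin N))) ≤ 4 * ρ.real Set.univ := by
      intro i
      rw [integral_finsetSum _ fun j _ => (hEsq i j).1]
      refine (Finset.sum_le_sum fun j _ => (hEsq i j).2).trans ?_
      simp only [Finset.sum_const, Finset.card_univ, Fintype.card_fin, nsmul_eq_mul]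
      rw [← mul_assoc, mul_inv_cancel₀ hNr.ne', one_mul]
    refine (Finset.sum_le_sum fun i _ => this i).trans ?_
    simp
  have hphm : Measurable fun ω => ph k (scaledW Y N ω) := ph_meas k _ (scaledW_meas Y hY.meas N)
  have hfst : ∫ ω, ph k (scaledW Y N ω) ∂Q = ∫ z, ph k (scaledW Y N z.1) ∂(Q.prod (gs ((F × Bool) ⊕ (Fin N × Fin N)))) := by
    have := integral_prod_mul (μ := Q) (ν := gs ((F × Bool) ⊕ (Fin N × Fin N))) (f := fun ω => ph k (scaledW Y N ω)) (g := fun _ => (1 : ℂ))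
    simpa using this.symm
  have hherm : ∀ z, (vmat (T z)).IsHermitian := by
    intro z
    rw [hdec z]
    exact (low_rank_bound (Finset.univ : Finset ((F × Bool) × Fin 4))
      (fun m => (Real.sqrt N)⁻¹ * Real.sqrt (a m.1.1.1) * z.2 (Sum.inl m.1) * t m.1 m.2)
      (fun m => v m.1 m.2) (scaledW Y N z.1) (scaledW_herm Y N z.1) k).1.add (hEh z.2)
  have i1 : Integrable (fun z : Ω' × (((F × Bool) ⊕ (Fin N × Fin N)) → ℝ) => ph k (scaledW Y N z.1)) (Q.prod (gs ((F × Bool) ⊕ (Fin N × Fin N)))) :=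
    Integrable.of_bound (hphm.comp measurable_fst).aestronglyMeasurable 1
      (Eventually.of_forall fun z => ph_norm k _ (scaledW_herm Y N z.1))
  have i2 : Integrable (fun z : Ω' × (((F × Bool) ⊕ (Fin N × Fin N)) → ℝ) => ph k (vmat (T z))) (Q.prod (gs ((F × Bool) ⊕ (Fin N × Fin N)))) :=
    Integrable.of_bound ((vmat_meas N k).comp hTm).aestronglyMeasurable 1
      (Eventually.of_forall fun z => ph_norm k _ (hherm z))
  rw [hfst, hlaw, ← integral_sub i1 i2]
  have hsnd : Integrable (fun z : Ω' × (((F × Bool) ⊕ (Fin N × Fin N)) → ℝ) => ∑ i, ∑ j, (E z.2 i j) ^ 2) (Q.prod (gs ((F × Bool) ⊕ (Fin N × Fin N)))) :=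
    hsumint.comp_snd Q
  have hsndv : ∫ z : Ω' × (((F × Bool) ⊕ (Fin N × Fin N)) → ℝ), ∑ i, ∑ j, (E z.2 i j) ^ 2 ∂(Q.prod (gs ((F × Bool) ⊕ (Fin N × Fin N)))) = ∫ x, ∑ i, ∑ j, (E x i j) ^ 2 ∂(gs ((F × Bool) ⊕ (Fin N × Fin N))) := by
    have := integral_prod_mul (μ := Q) (ν := gs ((F × Bool) ⊕ (Fin N × Fin N))) (f := fun _ => (1 : ℝ)) (g := fun x => ∑ i, ∑ j, (E x i j) ^ 2)
    simpa using this
  refine (norm_integral_le_integral_norm _).trans ?_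
  have ib : Integrable (fun z : Ω' × (((F × Bool) ⊕ (Fin N × Fin N)) → ℝ) => (N : ℝ)⁻¹ * (k * (2 * ((2 * s)⁻¹ * ∑ i, ∑ j, (E z.2 i j) ^ 2 + s / 2 * N)))) (Q.prod (gs ((F × Bool) ⊕ (Fin N × Fin N)))) := (((((hsnd.const_mul (2 * s)⁻¹).add (integrable_const (s / 2 * N))).const_mul 2).const_mul (k : ℝ)).const_mul (N : ℝ)⁻¹)
  refine (integral_mono (i1.sub i2).norm ((integrable_const _).add ib) hpt).trans ?_
  have hval : ∫ z : Ω' × (((F × Bool) ⊕ (Fin N × Fin N)) → ℝ), ((N : ℝ)⁻¹ * (F.card * 16 * k) + (N : ℝ)⁻¹ * (k * (2 * ((2 * s)⁻¹ * ∑ i, ∑ j, (E z.2 i j) ^ 2 + s / 2 * N)))) ∂(Q.prod (gs ((F × Bool) ⊕ (Fin N × Fin N))))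
      = (N : ℝ)⁻¹ * (F.card * 16 * k) + (N : ℝ)⁻¹ * (k * (2 * ((2 * s)⁻¹ * (∫ x, ∑ i, ∑ j, (E x i j) ^ 2 ∂(gs ((F × Bool) ⊕ (Fin N × Fin N)))) + s / 2 * N))) := by
    rw [integral_add (integrable_const _) ib, integral_const, integral_const_mul, integral_const_mul, integral_const_mul,
      integral_add (hsnd.const_mul _) (integrable_const _), integral_const_mul, hsndv]
    simp
  refine hval.le.trans ?_
  refine add_le_add le_rfl ?_
  have h5 : (N : ℝ)⁻¹ * (k * (2 * ((2 * s)⁻¹ * (∫ x, ∑ i, ∑ j, (E x i j) ^ 2 ∂(gs ((F × Bool) ⊕ (Fin N × Fin N)))) + s / 2 * N)))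
    ≤ (N : ℝ)⁻¹ * (k * (2 * ((2 * s)⁻¹ * (N * (4 * ρ.real Set.univ)) + s / 2 * N))) := by
    gcongr
  refine h5.trans (le_of_eq ?_)
  field_simp

end MainPart
section Final

lemma exp_re (x : ℝ) : (Complex.exp (Complex.I * (x : ℂ))).re = Real.cos x := by
  rw [mul_comm, Complex.exp_ofReal_mul_I_re]

lemma cos_int_s12 (μ : Measure (ℝ × ℝ)) [IsFiniteMeasure μ] (u v : ℤ) :
    Integrable (fun q : ℝ × ℝ => Real.cos (u * q.1 + v * q.2)) μ := by
  refine Integrable.of_bound (Continuous.aestronglyMeasurable (by fun_prop)) 1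
    (Eventually.of_forall fun q => ?_)
  exact Real.abs_cos_le_one _

lemma exp_int (μ : Measure (ℝ × ℝ)) [IsFiniteMeasure μ] (u v : ℤ) :
    Integrable (fun q : ℝ × ℝ => Complex.exp (Complex.I * ((u * q.1 + v * q.2 : ℝ) : ℂ))) μ := by
  refine Integrable.of_bound (Continuous.aestronglyMeasurable (by fun_prop)) 1
    (Eventually.of_forall fun q => ?_)
  rw [mul_comm, Complex.norm_exp_ofReal_mul_I]

lemma box_swap : Measure.map Prod.swap (volume.restrict specBox : Measure (ℝ × ℝ))
    = volume.restrict specBox := by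
  unfold specBox
  rw [Measure.volume_eq_prod, ← Measure.prod_restrict, Measure.prod_swap]

lemma box_swap_mp : MeasurePreserving Prod.swap (volume.restrict specBox : Measure (ℝ × ℝ))
    (volume.restrict specBox) := ⟨measurable_swap, box_swap⟩

lemma box_swap_int (h : ℝ × ℝ → ℝ) :
    ∫ q in specBox, h q.swap = ∫ q in specBox, h q :=
  box_swap_mp.integral_comp (MeasurableEquiv.prodComm (α := ℝ) (β := ℝ)).measurableEmbedding h

lemma discr_trunc (νd : Measure (ℝ × ℝ)) [IsFiniteMeasure νd]
    (hd : ∃ s : Set (ℝ × ℝ), s.Countable ∧ νd sᶜ = 0) (δ : ℝ) (hδ : 0 < δ) :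
    ∃ F : Finset (ℝ × ℝ), (νd.restrict ((F : Set (ℝ × ℝ))ᶜ)).real Set.univ < δ ∧
      ∀ u v : ℤ, ∫ q, Real.cos (u * q.1 + v * q.2) ∂νd =
        ∑ q ∈ F, νd.real {q} * Real.cos (u * q.1 + v * q.2)
        + ∫ q, Real.cos (u * q.1 + v * q.2) ∂(νd.restrict ((F : Set (ℝ × ℝ))ᶜ)) := by
  classical
  obtain ⟨s, hs, h0⟩ := hd
  have key : ∃ F : Finset (ℝ × ℝ), νd.real ((F : Set (ℝ × ℝ))ᶜ) < δ := by
    rcases s.eq_empty_or_nonempty with rfl | hne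
    · refine ⟨∅, ?_⟩
      simp only [Finset.coe_empty, measureReal_def, h0]
      simpa using hδ
    obtain ⟨e, he⟩ := hs.exists_eq_range hne
    let F : ℕ → Finset (ℝ × ℝ) := fun n => (Finset.range n).image e
    have hanti : Antitone fun n => ((F n : Set (ℝ × ℝ))ᶜ) := by
      intro n m hnm
      apply Set.compl_subset_compl.2
      exact_mod_cast Finset.image_subset_image (Finset.range_mono hnm)
    have hlim := tendsto_measure_iInter_atTop (μ := νd)
      (fun n => ((F n).measurableSet.compl).nullMeasurableSet) hanti ⟨0, measure_ne_top _ _⟩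
    have hin : ⋂ n, ((F n : Set (ℝ × ℝ))ᶜ) = sᶜ := by
      rw [← Set.compl_iUnion]
      congr 1
      rw [he]
      ext x
      simp only [F, Set.mem_iUnion, Finset.coe_image, Set.mem_image, Finset.coe_range, Set.mem_Iio, Set.mem_range]
      exact ⟨fun ⟨n, i, _, h⟩ => ⟨i, h⟩, fun ⟨i, h⟩ => ⟨i + 1, i, by omega, h⟩⟩
    rw [hin, h0] at hlim
    obtain ⟨n, hn⟩ := (hlim.eventually (gt_mem_nhds (ENNReal.ofReal_pos.2 hδ))).exists
    exact ⟨F n, (ENNReal.lt_ofReal_iff_toReal_lt (measure_ne_top _ _)).1 hn⟩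
  obtain ⟨F, hF⟩ := key
  refine ⟨F, ?_, fun u v => ?_⟩
  · rwa [measureReal_restrict_apply MeasurableSet.univ, Set.univ_inter]
  · rw [← integral_add_compl F.measurableSet (cos_int_s12 νd u v), integral_finset _ ((cos_int_s12 νd u v).integrableOn)]
    simp

lemma cov_rel {Ω Ω' : Type*} [MeasurableSpace Ω] [MeasurableSpace Ω'] (P : Measure Ω)
    (Q : Measure Ω') (X : ℤ → ℤ → Ω → ℝ) (Y : ℤ → ℤ → Ω' → ℝ) (ν νd : Measure (ℝ × ℝ))
    (f : ℝ × ℝ → ℝ) (hν : SpectralDecomp P X ν νd f)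
    (hY : HasSpecDensity Q Y (fun q => (f (q.1, q.2) + f (q.2, q.1)) / 2)) :
    IsFiniteMeasure νd ∧ ∀ u v, cv P X u v + cv P X v u = cv Q Y u v + cv Q Y v u +
      (∫ q, Real.cos (u * q.1 + v * q.2) ∂νd + ∫ q, Real.cos (v * q.1 + u * q.2) ∂νd) := by
  haveI := hν.finite
  set νa := (volume.restrict specBox).withDensity (fun q => ENNReal.ofReal (f q)) with hνa
  have hle : νd ≤ ν := by rw [hν.decomp]; exact Measure.le_add_left le_rfl
  have hlea : νa ≤ ν := by rw [hν.decomp]; exact Measure.le_add_right le_rfl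
  haveI hfd : IsFiniteMeasure νd := isFiniteMeasure_of_le ν hle
  haveI hfa : IsFiniteMeasure νa := isFiniteMeasure_of_le ν hlea
  refine ⟨hfd, ?_⟩
  have hfi : Integrable f (volume.restrict specBox) := by
    refine ⟨hν.f_meas.aestronglyMeasurable, ?_⟩
    rw [hasFiniteIntegral_iff_ofReal (Eventually.of_forall hν.f_nonneg)]
    have := measure_lt_top νa Set.univ
    rwa [hνa, withDensity_apply _ MeasurableSet.univ, Measure.restrict_univ] at this
  have hfs : Integrable (fun q : ℝ × ℝ => f q.swap) (volume.restrict specBox) :=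
    box_swap_mp.integrable_comp_of_integrable hfi
  set A : ℤ → ℤ → ℝ := fun u v => ∫ q in specBox, Real.cos (u * q.1 + v * q.2) * f q with hA
  have hbd : ∀ (u v : ℤ) (h : ℝ × ℝ → ℝ), Integrable h (volume.restrict specBox) →
      Integrable (fun q : ℝ × ℝ => Real.cos (u * q.1 + v * q.2) * h q) (volume.restrict specBox) := by
    intro u v h hh
    refine hh.bdd_mul (c := 1) (Continuous.aestronglyMeasurable (by fun_prop)) (Eventually.of_forall fun q => ?_)
    exact Real.abs_cos_le_one _
  have hX1 : ∀ u v, cv P X u v = A u v + ∫ q, Real.cos (u * q.1 + v * q.2) ∂νd := by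
    intro u v
    have h := congrArg Complex.re (hν.herglotz u v)
    rw [Complex.ofReal_re] at h
    have h2 : (∫ q, Complex.exp (Complex.I * ((u * q.1 + v * q.2 : ℝ) : ℂ)) ∂ν).re
        = ∫ q, Real.cos (u * q.1 + v * q.2) ∂ν := by
      have := integral_re (exp_int ν u v)
      simp only [RCLike.re_eq_complex_re, exp_re] at this
      exact this.symm
    rw [cv, ← h, h2, hν.decomp, integral_add_measure (cos_int_s12 _ u v) (cos_int_s12 _ u v)]
    congr 1
    rw [hA, integral_withDensity_eq_integral_toReal_smul (by exact hν.f_meas.ennreal_ofReal)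
      (Eventually.of_forall fun _ => ENNReal.ofReal_lt_top)]
    refine integral_congr_ae (Eventually.of_forall fun q => ?_)
    simp only [ENNReal.toReal_ofReal (hν.f_nonneg q), smul_eq_mul, mul_comm]
  have hswap : ∀ u v : ℤ, ∫ q in specBox, Real.cos (u * q.1 + v * q.2) * f q.swap = A v u := by
    intro u v
    have e := box_swap_int (fun q => Real.cos (v * q.1 + u * q.2) * f q)
    refine Eq.trans ?_ e
    refine integral_congr_ae (Eventually.of_forall fun q => ?_)
    simp only [Prod.fst_swap, Prod.snd_swap]
    rw [add_comm]
  have hY1 : ∀ u v, cv Q Y u v = (A u v + A v u) / 2 := by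
    intro u v
    have h := congrArg Complex.re (hY u v)
    rw [Complex.ofReal_re] at h
    have hgi : Integrable (fun q : ℝ × ℝ => (f (q.1, q.2) + f (q.2, q.1)) / 2) (volume.restrict specBox) :=
      (hfi.add hfs).div_const 2
    have hi : Integrable (fun q : ℝ × ℝ => Complex.exp (Complex.I * ((u * q.1 + v * q.2 : ℝ) : ℂ)) *
        (((f (q.1, q.2) + f (q.2, q.1)) / 2 : ℝ) : ℂ)) (volume.restrict specBox) := by
      refine hgi.ofReal.bdd_mul (c := 1) (Continuous.aestronglyMeasurable (by fun_prop)) (Eventually.of_forall fun q => ?_)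
      rw [mul_comm, Complex.norm_exp_ofReal_mul_I]
    have h2 := integral_re hi
    simp only [RCLike.re_eq_complex_re, Complex.re_mul_ofReal, exp_re] at h2
    rw [cv, ← h]
    refine h2.symm.trans ?_
    rw [← hswap u v, hA, ← integral_add (hbd u v f hfi) (hbd u v _ hfs), ← integral_div]
    refine integral_congr_ae (Eventually.of_forall fun q => ?_)
    simp only [Prod.swap, Prod.mk.eta]
    ring
  intro u v
  rw [hX1, hX1, hY1, hY1]
  ring

end Final
/-- **Lemma 3.6.** The limiting spectral distribution is unchanged when the
density `f` is replaced by its symmetrization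
`g(x,y) = (f(x,y) + f(y,x))/2`. -/
theorem statement12 {Ω : Type} [MeasurableSpace Ω] (P : Measure Ω)
    [IsProbabilityMeasure P] (X : ℤ → ℤ → Ω → ℝ) (ν νd : Measure (ℝ × ℝ))
    (f : ℝ × ℝ → ℝ) (hX : StatGauss P X) (hν : SpectralDecomp P X ν νd f)
    (μf : Measure ℝ) (hμf : IsProbabilityMeasure μf)
    (hconvf : ESDTendstoInProb P (scaledW X) μf)
    (μg : Measure ℝ) (hμg : IsProbabilityMeasure μg)
    (hg : IsLSDofDensity (fun q => (f (q.1, q.2) + f (q.2, q.1)) / 2) μg) :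
    μf = μg := by
  obtain ⟨Ω', mΩ', Q, hQ, Y, hY, hspec, hconvg⟩ := hg
  obtain ⟨hfd, hcov⟩ := cov_rel P Q X Y ν νd f hν hspec
  refine measure_ext_uu μf μg fun k => ?_
  have l1 := ph_tendsto P X hX.meas μf hconvf k
  have l2 := ph_tendsto Q Y hY.meas μg hconvg k
  have l3 := (l2.sub l1).norm
  have hz : ‖∫ x, uu x ^ k ∂μg - ∫ x, uu x ^ k ∂μf‖ ≤ 0 := by
    have hb : ∀ s : ℝ, 0 < s → ‖∫ x, uu x ^ k ∂μg - ∫ x, uu x ^ k ∂μf‖ ≤ k * (5 * s) := by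
      intro s hs
      obtain ⟨F, hF, hFc⟩ := discr_trunc νd hν.discrete (s ^ 2) (by positivity)
      set ρ := νd.restrict ((F : Set (ℝ × ℝ))ᶜ) with hρ
      have hr : Tendsto (fun N : ℕ => (N : ℝ)⁻¹ * (F.card * 16 * k) + k * (4 * ρ.real Set.univ / s + s))
          atTop (nhds (0 * (F.card * 16 * k) + k * (4 * ρ.real Set.univ / s + s))) :=
        (tendsto_inv_atTop_nhds_zero_nat.mul_const _).add_const _
      have hle := le_of_tendsto_of_tendsto l3 hr (by
        filter_upwards [eventually_gt_atTop 0] with N hN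
        exact main_est P Q X Y hX hY N k hN F (fun q => νd.real {q}) (fun q => measureReal_nonneg)
          ρ s hs (fun u v => by rw [hcov, hFc, hFc]))
      refine hle.trans ?_
      rw [zero_mul, zero_add]
      refine mul_le_mul_of_nonneg_left ?_ (Nat.cast_nonneg k)
      have : 4 * ρ.real Set.univ / s ≤ 4 * s := by
        rw [div_le_iff₀ hs]
        nlinarith
      linarith
    have ht : Tendsto (fun s : ℝ => (k : ℝ) * (5 * s)) (nhdsWithin 0 (Set.Ioi 0)) (nhds ((k : ℝ) * (5 * 0))) :=
      ((continuous_const.mul (continuous_const.mul continuous_id)).tendsto 0).mono_left nhdsWithin_le_nhds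
    have := ge_of_tendsto ht (by
      filter_upwards [self_mem_nhdsWithin] with s hs
      exact hb s hs)
    simpa using this
  have h0 := norm_le_zero_iff.1 hz
  exact (sub_eq_zero.1 h0).symm

end
end
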